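/- arXiv:2103.05336 — 17 statements merged into one kernel-verified Lean document; each statement's English description precedes it below -/
import Mathlib

section
/- Let <₁ and <₂ be semi-linear strict partial orders on a finite set A. If the union <₁ ∪̄ <₂ (the transitive closure of the union of the two relations) is irreflexive, then <₁ ∪̄ <₂ is a semi-linear strict partial order on A. -/
variable {A : Type*}

/-- A strict partial order on `A`: an irreflexive and transitive relation. -/
def StrictPO (r : A → A → Prop) : Prop :=
  (∀ a, ¬ r a a) ∧ (∀ a b c, r a b → r b c → r a c)

/-- A strict partial order is semi-linear if it is induced by a surjection onto
`{1,…,l}` (modeled as `Fin l`). -/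
def SemiLinear (r : A → A → Prop) : Prop :=
  ∃ (l : ℕ) (h : A → Fin l), Function.Surjective h ∧ ∀ a b, r a b ↔ h a < h b

/-- The union `r ∪̄ s` of two relations: the transitive closure of their union. -/
def relUnion (r s : A → A → Prop) : A → A → Prop :=
  Relation.TransGen (fun a b => r a b ∨ s a b)

/-- A double order: a pair of strict partial orders such that any two distinct
elements are comparable by at least one of them. -/
def IsDoubleOrder (x y : A → A → Prop) : Prop :=
  StrictPO x ∧ StrictPO y ∧ ∀ a b : A, a ≠ b → x a b ∨ x b a ∨ y a b ∨ y b a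

/-- A regular double order: `x` is semi-linear and `x`-comparable elements are
`y`-incomparable. -/
def IsRegularDO (x y : A → A → Prop) : Prop :=
  IsDoubleOrder x y ∧ SemiLinear x ∧ ∀ a b, x a b → ¬ y a b ∧ ¬ y b a

/-- The right action of a permutation on a relation. -/
def permRel (σ : Equiv.Perm A) (r : A → A → Prop) : A → A → Prop :=
  fun a b => r (σ a) (σ b)

/-- A semi-regular double order: a componentwise union (transitive closure,
with both components irreflexive) of finitely many regular double orders. -/
def IsSemiRegular (x y : A → A → Prop) : Prop :=
  (∀ a, ¬ x a a) ∧ (∀ a, ¬ y a a) ∧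
  ∃ k : ℕ, 0 < k ∧ ∃ xs ys : Fin k → (A → A → Prop),
    (∀ i, IsRegularDO (xs i) (ys i)) ∧
    (∀ a b, x a b ↔ Relation.TransGen (fun u v => ∃ i, xs i u v) a b) ∧
    (∀ a b, y a b ↔ Relation.TransGen (fun u v => ∃ i, ys i u v) a b)

/-- The relation `y ∖ x`: `a (y ∖ x) b` iff `a y b` and `a, b` are `x`-incomparable. -/
def dminus (y x : A → A → Prop) : A → A → Prop :=
  fun a b => y a b ∧ ¬ x a b ∧ ¬ x b a

/-- The subset `U(<*)` of the space of functions `A → ℝ²` associated to a double order. -/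
def USet (x y : A → A → Prop) : Set (A → ℝ × ℝ) :=
  {f | ∀ a b, (x a b → (f a).1 < (f b).1) ∧ (y a b → (f a).2 < (f b).2)}

/-!
If the rank functions `f` and `g` of the two orders ordered some pair in opposite directions, that
pair would form a cycle of length two in the union. So irreflexivity makes `f` and `g` vary
together, and then "`f` or `g` increases" is the pullback of the lexicographic order along `(f, g)`,
which is already transitive; as `(f, g)` takes finitely many values, they can be renumbered `1,…,l`.
-/

theorem semiLinear_preimage_lt {B : Type*} [LinearOrder B] (f : A → B) [Finite (Set.range f)] :
    SemiLinear (f ⁻¹'o (· < ·)) := by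
  have := Fintype.ofFinite (Set.range f)
  let e := (Fintype.orderIsoFinOfCardEq (Set.range f) rfl).symm
  refine ⟨_, e ∘ Set.rangeFactorization f,
    e.surjective.comp Set.rangeFactorization_surjective, fun a b => ?_⟩
  exact (e.lt_iff_lt (x := Set.rangeFactorization f a) (y := Set.rangeFactorization f b)).symm

section PreimageLT

variable {α β : Type*} {f : A → α} {g : A → β}

theorem monovary_of_relUnion_irrefl [LinearOrder α] [Preorder β]
    (hirr : ∀ a, ¬ relUnion (f ⁻¹'o (· < ·)) (g ⁻¹'o (· < ·)) a a) : Monovary f g := by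
  intro a b hg
  by_contra! hf
  exact hirr a (.tail (.single (.inr hg)) (.inl hf))

theorem lt_or_lt_iff_toLex_lt_of_monovary [PartialOrder α] [Preorder β] (h : Monovary f g)
    (a b : A) : f a < f b ∨ g a < g b ↔ toLex (f a, g a) < toLex (f b, g b) := by
  rw [Prod.Lex.toLex_lt_toLex]
  constructor
  · rintro (hf | hg)
    · exact .inl hf
    · exact (h hg).lt_or_eq.imp_right fun f_eq => ⟨f_eq, hg⟩
  · exact Or.imp_right And.right

theorem relUnion_preimage_lt_of_monovary [PartialOrder α] [Preorder β] (h : Monovary f g) :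
    relUnion (f ⁻¹'o (· < ·)) (g ⁻¹'o (· < ·)) =
      (fun a => toLex (f a, g a)) ⁻¹'o (· < ·) := by
  have union_eq : (fun a b => (f ⁻¹'o (· < ·)) a b ∨ (g ⁻¹'o (· < ·)) a b) =
      (fun a => toLex (f a, g a)) ⁻¹'o (· < ·) := by
    ext a b
    exact lt_or_lt_iff_toLex_lt_of_monovary h a b
  rw [relUnion, union_eq]
  exact Relation.transGen_eq_self

end PreimageLT

theorem stmt0_general {r₁ r₂ : A → A → Prop}
    (hs₁ : SemiLinear r₁) (hs₂ : SemiLinear r₂) (hirr : ∀ a, ¬ relUnion r₁ r₂ a a) :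
    StrictPO (relUnion r₁ r₂) ∧ SemiLinear (relUnion r₁ r₂) := by
  refine ⟨⟨hirr, fun _ _ _ => Relation.TransGen.trans⟩, ?_⟩
  obtain ⟨l, f, -, hf⟩ := hs₁
  obtain ⟨m, g, -, hg⟩ := hs₂
  obtain rfl : r₁ = f ⁻¹'o (· < ·) := by ext a b; exact hf a b
  obtain rfl : r₂ = g ⁻¹'o (· < ·) := by ext a b; exact hg a b
  rw [relUnion_preimage_lt_of_monovary (monovary_of_relUnion_irrefl hirr)]
  exact semiLinear_preimage_lt _

/-- If `r₁` and `r₂` are semi-linear strict partial orders on a finite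
set `A`, and their union `r₁ ∪̄ r₂` is irreflexive, then `r₁ ∪̄ r₂` is a semi-linear
strict partial order. -/
theorem stmt0 {A : Type*} [Fintype A] (r₁ r₂ : A → A → Prop)
    (h₁ : StrictPO r₁) (h₂ : StrictPO r₂)
    (hs₁ : SemiLinear r₁) (hs₂ : SemiLinear r₂)
    (hirr : ∀ a, ¬ relUnion r₁ r₂ a a) :
    StrictPO (relUnion r₁ r₂) ∧ SemiLinear (relUnion r₁ r₂) :=
  stmt0_general hs₁ hs₂ hirr
end

section
/- The symmetric group Σ_A acts freely on the set of double orders on a finite set A: if <* is a double order on A and σ is a permutation of A with <*σ = <*, then σ is the identity. -/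
variable {A : Type*}

/-! A monotone map sending `a` strictly up (or down) keeps doing so under iteration, so `a` never
recurs. Hence a periodic point is incomparable to its image in both orders of a double order it
respects, and must be fixed; every point is periodic under a permutation of a finite set. -/

section Preorder

variable {α : Type*} [Preorder α] {f : α → α} {a : α}

lemma not_lt_map_of_mem_periodicPts (hf : Monotone f) (ha : a ∈ Function.periodicPts f) :
    ¬ a < f a := by
  obtain ⟨n, hn, hfix⟩ := ha
  intro hlt
  have hiter : id^[n] a < f^[n] a :=
    Function.Commute.id_left.iterate_pos_lt_of_map_lt' strictMono_id hf hlt hn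
  rw [Function.iterate_id, id_eq, hfix.eq] at hiter
  exact lt_irrefl a hiter

lemma incompRel_lt_map_of_mem_periodicPts (hf : Monotone f) (ha : a ∈ Function.periodicPts f) :
    IncompRel (· < ·) a (f a) :=
  ⟨not_lt_map_of_mem_periodicPts hf ha, not_lt_map_of_mem_periodicPts hf.dual ha⟩

end Preorder

section Relations

variable {r x y : A → A → Prop} {f : A → A} {a b : A}

lemma StrictPO.isStrictOrder (hr : StrictPO r) : IsStrictOrder A r where
  irrefl := hr.1
  trans := hr.2

lemma StrictPO.incompRel_map_of_mem_periodicPts (hr : StrictPO r)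
    (hf : ∀ ⦃b c⦄, r b c → r (f b) (f c)) (ha : a ∈ Function.periodicPts f) :
    IncompRel r a (f a) := by
  have := hr.isStrictOrder
  let _ : PartialOrder A := partialOrderOfSO r
  have hmono : StrictMono f := hf
  exact incompRel_lt_map_of_mem_periodicPts hmono.monotone ha

lemma IsDoubleOrder.eq_of_incompRel (hd : IsDoubleOrder x y) (hx : IncompRel x a b)
    (hy : IncompRel y a b) : a = b := by
  by_contra hne
  rcases hd.2.2 a b hne with h | h | h | h
  exacts [hx.1 h, hx.2 h, hy.1 h, hy.2 h]

theorem stmt2_general (hd : IsDoubleOrder x y) (hx : ∀ ⦃b c⦄, x b c → x (f b) (f c))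
    (hy : ∀ ⦃b c⦄, y b c → y (f b) (f c)) (ha : a ∈ Function.periodicPts f) :
    Function.IsFixedPt f a :=
  (hd.eq_of_incompRel (hd.1.incompRel_map_of_mem_periodicPts hx ha)
    (hd.2.1.incompRel_map_of_mem_periodicPts hy ha)).symm

end Relations

/-- The symmetric group acts freely on double orders on a finite set:
if `<*σ = <*` then `σ` is the identity. -/
theorem stmt2 {A : Type*} [Fintype A] (x y : A → A → Prop)
    (hd : IsDoubleOrder x y) (σ : Equiv.Perm A)
    (hx : permRel σ x = x) (hy : permRel σ y = y) :
    σ = 1 :=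
  Equiv.ext fun a ↦ stmt2_general hd (fun b c ↦ (congrFun₂ hx b c).mpr)
    (fun b c ↦ (congrFun₂ hy b c).mpr) (σ.injective.mem_periodicPts a)
end

section
/- Let <* = (x<, y<) be a regular double order on a finite set A and let σ be a permutation of A. Then the componentwise union <* ∪̄ (<*σ) — that is, the pair consisting of the transitive closure of x< ∪ (x<σ) and the transitive closure of y< ∪ (y<σ) — is a double order (equivalently, both transitive closures are irreflexive) if and only if σ is the identity. -/
variable {A : Type*}

/-!
If `x` is induced by `h : A → ι`, irreflexivity of `x ∪̄ (xσ)` says that `σ` never reverses the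
strict order of two `h`-values. Were `h (σ a) < h a`, the set `{b | h b < h a}` would be `σ`-stable
and contain `σ a`, hence the whole finite `σ`-cycle of `a`, and in particular `a` itself; dually for
`h a < h (σ a)`. So `h ∘ σ = h`, and `σ` preserves `x`-comparability. By regularity `σ` then
preserves `y`-comparability too, and irreflexivity of `y ∪̄ (yσ)` makes it `y`-monotone. The same
cycle argument shows that `a` and `σ a` are `y`-incomparable; being also `x`-incomparable, they
coincide.
-/

open Function Set

theorem mem_of_apply_mem_of_mem_periodicPts {f : A → A} {s : Set A} {a : A}
    (ha : a ∈ periodicPts f) (hs : MapsTo f s s) (hfa : f a ∈ s) : a ∈ s := by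
  obtain ⟨n, hn, hna⟩ := ha
  have hmem : f^[n - 1] (f a) ∈ s := hs.iterate (n - 1) hfa
  rwa [← iterate_succ_apply, Nat.succ_eq_add_one, Nat.sub_add_cancel hn, hna.eq] at hmem

theorem apply_eq_of_lt_imp_le {ι : Type*} [LinearOrder ι] {h : A → ι} {f : A → A}
    (hmono : ∀ a b, h a < h b → h (f a) ≤ h (f b)) {a : A} (ha : a ∈ periodicPts f) :
    h (f a) = h a := by
  refine le_antisymm (not_lt.1 fun hgt => ?_) (not_lt.1 fun hlt => ?_)
  · have hs : MapsTo f {b | h a < h b} {b | h a < h b} := fun b hb =>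
      hgt.trans_le (hmono a b hb)
    have hmem : a ∈ {b | h a < h b} := mem_of_apply_mem_of_mem_periodicPts ha hs hgt
    exact lt_irrefl _ hmem
  · have hs : MapsTo f {b | h b < h a} {b | h b < h a} := fun b hb =>
      (hmono b a hb).trans_lt hlt
    have hmem : a ∈ {b | h b < h a} := mem_of_apply_mem_of_mem_periodicPts ha hs hlt
    exact lt_irrefl _ hmem

theorem StrictPO.not_rel_apply {r : A → A → Prop} (hr : StrictPO r) {f : A → A}
    (hmono : ∀ a b, r a b → r (f a) (f b)) {a : A} (ha : a ∈ periodicPts f) : ¬ r a (f a) := by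
  intro haf
  have hs : MapsTo f {b | r a b} {b | r a b} := fun b hb => hr.2 _ _ _ haf (hmono a b hb)
  exact hr.1 a (mem_of_apply_mem_of_mem_periodicPts ha hs haf)

theorem StrictPO.swap {r : A → A → Prop} (hr : StrictPO r) : StrictPO (Function.swap r) :=
  ⟨hr.1, fun _ _ _ hab hbc => hr.2 _ _ _ hbc hab⟩

theorem permRel_one (r : A → A → Prop) : permRel 1 r = r := rfl

theorem relUnion_self (r : A → A → Prop) [IsTrans A r] : relUnion r r = r := by
  simp only [relUnion, or_self, Relation.transGen_eq_self]

theorem StrictPO.not_relUnion_self {r : A → A → Prop} (hr : StrictPO r) (a : A) :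
    ¬ relUnion r r a a := by
  have : IsTrans A r := ⟨hr.2⟩
  rw [relUnion_self]
  exact hr.1 a

theorem not_rel_swap_of_not_relUnion {r s : A → A → Prop} {a b : A}
    (ha : ¬ relUnion r s a a) (hab : r a b) : ¬ s b a :=
  fun hba => ha (.tail (.single (.inl hab)) (.inr hba))

theorem rel_perm_apply_of_rel {x y : A → A → Prop}
    (hcomp : ∀ a b, a ≠ b → x a b ∨ x b a ∨ y a b ∨ y b a)
    (hdisj : ∀ a b, x a b → ¬ y a b ∧ ¬ y b a) {σ : Equiv.Perm A}
    (hσ : ∀ a b, x (σ a) (σ b) → x a b) {a b : A} (ha : ¬ relUnion y (permRel σ y) a a)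
    (hab : y a b) : y (σ a) (σ b) := by
  have hne : a ≠ b := by
    rintro rfl
    exact ha (.single (.inl hab))
  rcases hcomp _ _ (σ.injective.ne hne) with hx | hx | hy' | hy'
  · exact absurd hab (hdisj a b (hσ a b hx)).1
  · exact absurd hab (hdisj b a (hσ b a hx)).2
  · exact hy'
  · exact absurd hy' (not_rel_swap_of_not_relUnion (s := permRel σ y) ha hab)

theorem stmt3_general {ι : Type*} [LinearOrder ι] {x y : A → A → Prop} (hxy : IsDoubleOrder x y)
    {h : A → ι} (hxh : ∀ a b, x a b ↔ h a < h b) (hdisj : ∀ a b, x a b → ¬ y a b ∧ ¬ y b a)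
    {σ : Equiv.Perm A} (hσ : ∀ a, a ∈ periodicPts σ) :
    ((∀ a, ¬ relUnion x (permRel σ x) a a) ∧ (∀ a, ¬ relUnion y (permRel σ y) a a))
      ↔ σ = 1 := by
  obtain ⟨hx, hy, hcomp⟩ := hxy
  constructor
  · rintro ⟨hX, hY⟩
    have hinv (a : A) : h (σ a) = h a := by
      refine apply_eq_of_lt_imp_le (fun b c hbc => not_lt.1 fun hcb => ?_) (hσ a)
      exact not_rel_swap_of_not_relUnion (hX b) ((hxh _ _).2 hbc) ((hxh _ _).2 hcb)
    have hmono (a b : A) : y a b → y (σ a) (σ b) :=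
      rel_perm_apply_of_rel hcomp hdisj (fun a b => by simp only [hxh, hinv, imp_self]) (hY a)
    ext a
    by_contra hne
    rcases hcomp _ _ hne with hlt | hlt | hlt | hlt
    · exact ((hxh _ _).1 hlt).ne (hinv a)
    · exact ((hxh _ _).1 hlt).ne' (hinv a)
    · exact hy.swap.not_rel_apply (fun b c => hmono c b) (hσ a) hlt
    · exact hy.not_rel_apply hmono (hσ a) hlt
  · rintro rfl
    simp only [permRel_one]
    exact ⟨hx.not_relUnion_self, hy.not_relUnion_self⟩

/-- For a regular double order `<* = (x,y)` on a finite set and a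
permutation `σ`, the componentwise union `<* ∪̄ (<*σ)` is a double order
(equivalently, both transitive closures are irreflexive) iff `σ` is the identity. -/
theorem stmt3 {A : Type*} [Fintype A] (x y : A → A → Prop)
    (hreg : IsRegularDO x y) (σ : Equiv.Perm A) :
    ((∀ a, ¬ relUnion x (permRel σ x) a a) ∧ (∀ a, ¬ relUnion y (permRel σ y) a a))
      ↔ σ = 1 := by
  obtain ⟨hxy, ⟨_, _, -, hxh⟩, hdisj⟩ := hreg
  exact stmt3_general hxy hxh hdisj σ.injective.mem_periodicPts
end

section
/- If <* = (x<, y<) is a semi-regular double order on a finite set A, then (x<, y< ∖ x<) is a regular double order on A. In particular y< ∖ x< is a transitive irreflexive relation, x< is semi-linear, and a x< b implies that a and b are (y< ∖ x<)-incomparable. -/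
variable {A : Type*}

/-!
Suppose that `xᵢ` is induced by a height function `hᵢ`. Irreflexivity of the union `x` of the `xᵢ`
forbids `hᵢ a < hᵢ b` and `hⱼ b < hⱼ a` from holding together, so the `hᵢ` never disagree strictly
and `x` is induced by the single function `∑ i, hᵢ`. This function takes finitely many values since
each `hᵢ` does, so `x` is semi-linear. Being induced by a height function, `x` satisfies
`x a c → x a b ∨ x b c`. Hence a chain of two `x`-incomparable pairs has `x`-incomparable ends,
which makes `y ∖ x` transitive.
-/

open Relation

theorem transGen_exists_lt_iff_sum_lt {ι M : Type*} [Fintype ι] [AddCommMonoid M] [LinearOrder M]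
    [IsOrderedCancelAddMonoid M] {h : ι → A → M}
    (irrefl : ∀ a, ¬ TransGen (fun u v => ∃ i, h i u < h i v) a a) (a b : A) :
    TransGen (fun u v => ∃ i, h i u < h i v) a b ↔ ∑ i, h i a < ∑ i, h i b := by
  constructor
  · have sum_lt : ∀ {u v}, (∃ i, h i u < h i v) → ∑ i, h i u < ∑ i, h i v := by
      rintro u v ⟨i, hi⟩
      have agree : ∀ j, h j u ≤ h j v := fun j =>
        not_lt.mp fun hj => irrefl u (.tail (.single ⟨i, hi⟩) ⟨j, hj⟩)
      exact Finset.sum_lt_sum (fun j _ => agree j) ⟨i, Finset.mem_univ i, hi⟩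
    intro hab
    induction hab with
    | single huv => exact sum_lt huv
    | tail _ huv ih => exact ih.trans (sum_lt huv)
  · intro hab
    obtain ⟨i, -, hi⟩ := Finset.exists_lt_of_sum_lt hab
    exact .single ⟨i, hi⟩

namespace SemiLinear

theorem of_finite_range {L : Type*} [LinearOrder L] {r : A → A → Prop} {f : A → L}
    (hf : (Set.range f).Finite) (hr : ∀ a b, r a b ↔ f a < f b) : SemiLinear r := by
  have := hf.fintype
  let e : Fin (Fintype.card (Set.range f)) ≃o Set.range f := Fintype.orderIsoFinOfCardEq _ rfl
  refine ⟨_, e.symm ∘ Set.rangeFactorization f,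
    e.symm.surjective.comp Set.rangeFactorization_surjective, fun a b => ?_⟩
  exact (hr a b).trans
    (e.symm.lt_iff_lt (x := Set.rangeFactorization f a) (y := Set.rangeFactorization f b)).symm

theorem isOrderConnected {r : A → A → Prop} (hr : SemiLinear r) : IsOrderConnected A r := by
  obtain ⟨l, h, -, hr⟩ := hr
  refine ⟨fun a b c hac => ?_⟩
  simp only [hr] at hac ⊢
  exact IsOrderConnected.conn (h a) (h b) (h c) hac

theorem transGen_exists {ι : Type*} [Finite ι] {r : ι → A → A → Prop}
    (hr : ∀ i, SemiLinear (r i)) (irrefl : ∀ a, ¬ TransGen (fun u v => ∃ i, r i u v) a a) :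
    SemiLinear (TransGen fun u v => ∃ i, r i u v) := by
  cases nonempty_fintype ι
  choose l h _ hr using hr
  simp only [hr, Fin.lt_def] at irrefl ⊢
  have finite_range : (Set.range fun a => ∑ i, (h i a : ℕ)).Finite :=
    (Set.finite_range fun t : ∀ i, Fin (l i) => ∑ i, (t i : ℕ)).subset
      (Set.range_comp_subset_range (fun a i => h i a) fun t => ∑ i, (t i : ℕ))
  exact of_finite_range finite_range (transGen_exists_lt_iff_sum_lt irrefl)

end SemiLinear

theorem StrictPO.dminus {x y : A → A → Prop} [IsOrderConnected A x] (hy : StrictPO y) :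
    StrictPO (dminus y x) := by
  refine ⟨fun a haa => hy.1 a haa.1, ?_⟩
  rintro a b c ⟨yab, nab, nba⟩ ⟨ybc, nbc, ncb⟩
  exact ⟨hy.2 a b c yab ybc, IsOrderConnected.neg_trans nab nbc, IsOrderConnected.neg_trans ncb nba⟩

theorem IsDoubleOrder.isRegularDO_dminus {x y : A → A → Prop} (h : IsDoubleOrder x y)
    (hx : SemiLinear x) : IsRegularDO x (dminus y x) := by
  obtain ⟨x_strict, y_strict, comparable⟩ := h
  have := hx.isOrderConnected
  refine ⟨⟨x_strict, y_strict.dminus, fun a b hab => ?_⟩, hx,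
    fun a b xab => ⟨fun hd => hd.2.1 xab, fun hd => hd.2.2 xab⟩⟩
  have := comparable a b hab
  unfold dminus
  tauto

namespace IsSemiRegular

variable {x y : A → A → Prop}

theorem isDoubleOrder (h : IsSemiRegular x y) : IsDoubleOrder x y := by
  obtain ⟨x_irrefl, y_irrefl, k, hk, xs, ys, regular, hx, hy⟩ := h
  obtain rfl : x = TransGen fun u v => ∃ i, xs i u v := funext₂ fun a b => propext (hx a b)
  obtain rfl : y = TransGen fun u v => ∃ i, ys i u v := funext₂ fun a b => propext (hy a b)
  refine ⟨⟨x_irrefl, fun _ _ _ => .trans⟩, ⟨y_irrefl, fun _ _ _ => .trans⟩, fun a b hab => ?_⟩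
  let i : Fin k := ⟨0, hk⟩
  obtain ⟨⟨-, -, comparable⟩, -⟩ := regular i
  exact (comparable a b hab).imp (.single ⟨i, ·⟩) <|
    .imp (.single ⟨i, ·⟩) <| .imp (.single ⟨i, ·⟩) (.single ⟨i, ·⟩)

theorem semiLinear (h : IsSemiRegular x y) : SemiLinear x := by
  obtain ⟨x_irrefl, -, k, -, xs, ys, regular, hx, -⟩ := h
  obtain rfl : x = TransGen fun u v => ∃ i, xs i u v := funext₂ fun a b => propext (hx a b)
  exact .transGen_exists (fun i => (regular i).2.1) x_irrefl

end IsSemiRegular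

theorem stmt4_general (x y : A → A → Prop) (h : IsSemiRegular x y) : IsRegularDO x (dminus y x) :=
  h.isDoubleOrder.isRegularDO_dminus h.semiLinear

/-- If `(x, y)` is a semi-regular double order on a finite set `A`,
then `(x, y ∖ x)` is a regular double order on `A` (in particular `y ∖ x` is a
strict partial order, `x` is semi-linear, and `x`-comparable elements are
`(y ∖ x)`-incomparable). -/
theorem stmt4 {A : Type*} [Fintype A] (x y : A → A → Prop)
    (h : IsSemiRegular x y) :
    IsRegularDO x (dminus y x) :=
  stmt4_general x y h
end

section
/- Let <*₁ = (x<₁, y<₁) and <*₂ = (x<₂, y<₂) be double orders on a finite set A with x<₁ ⊆ x<₂ and y<₁ ⊆ y<₂. Then (a) y<₂ ∖ x<₂ = y<₁ ∖ x<₂ and y<₁ ∖ x<₂ ⊆ y<₁ ∖ x<₁; (b) consequently x<₁ ⊆ x<₂ and y<₂ ∖ x<₂ ⊆ y<₁ ∖ x<₁. -/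
variable {A : Type*}

section

variable {x x₁ x₂ y y₁ y₂ : A → A → Prop}

theorem StrictPO.asymm (h : StrictPO x) : Std.Asymm x where
  asymm a b hab hba := h.1 a (h.2 a b a hab hba)

/-- Two relations are jointly total if any two distinct elements are comparable by at least one of
them. This is the third clause of `IsDoubleOrder`, isolated because it survives enlarging either
relation, which need not remain an order. -/
def JointlyTotal (x y : A → A → Prop) : Prop :=
  ∀ a b : A, a ≠ b → x a b ∨ x b a ∨ y a b ∨ y b a

theorem JointlyTotal.mono_left (h : JointlyTotal x₁ y) (hx : x₁ ≤ x₂) : JointlyTotal x₂ y :=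
  fun a b hne ↦ (h a b hne).imp (hx a b) (Or.imp_left (hx b a))

theorem dminus_mono_left (hy : y₁ ≤ y₂) : dminus y₁ x ≤ dminus y₂ x :=
  fun a b ↦ And.imp_left (hy a b)

theorem dminus_anti_right (hx : x₁ ≤ x₂) : dminus y x₂ ≤ dminus y x₁ :=
  fun a b ↦ And.imp_right (And.imp (mt (hx a b)) (mt (hx b a)))

theorem JointlyTotal.dminus_eq [Std.Asymm y₂] (h : JointlyTotal x y₁) (hy : y₁ ≤ y₂) :
    dminus y₂ x = dminus y₁ x := by
  refine le_antisymm ?_ (dminus_mono_left hy)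
  rintro a b ⟨hab, hxab, hxba⟩
  have hne : a ≠ b := ne_of_irrefl hab
  have hcomp : y₁ a b ∨ y₁ b a := ((h a b hne).resolve_left hxab).resolve_left hxba
  -- The larger relation `y₂` fixes the direction in which `y₁` compares `a` and `b`.
  have hyba : ¬ y₁ b a := fun hba ↦ Std.Asymm.asymm a b hab (hy b a hba)
  exact ⟨hcomp.resolve_right hyba, hxab, hxba⟩

end

theorem stmt5_general {A : Type*} (x₁ y₁ x₂ y₂ : A → A → Prop) [Std.Asymm y₂]
    (h₁ : JointlyTotal x₁ y₁)
    (hx : ∀ a b, x₁ a b → x₂ a b) (hy : ∀ a b, y₁ a b → y₂ a b) :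
    (∀ a b, dminus y₂ x₂ a b ↔ dminus y₁ x₂ a b) ∧
    (∀ a b, dminus y₁ x₂ a b → dminus y₁ x₁ a b) ∧
    ((∀ a b, x₁ a b → x₂ a b) ∧ (∀ a b, dminus y₂ x₂ a b → dminus y₁ x₁ a b)) := by
  have heq : dminus y₂ x₂ = dminus y₁ x₂ := (h₁.mono_left hx).dminus_eq hy
  have hle : dminus y₁ x₂ ≤ dminus y₁ x₁ := dminus_anti_right hx
  exact ⟨fun a b ↦ by rw [heq], hle, hx, heq.trans_le hle⟩

/-- For double orders `(x₁,y₁) ⊆ (x₂,y₂)` componentwise,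
(a) `y₂ ∖ x₂ = y₁ ∖ x₂` and `y₁ ∖ x₂ ⊆ y₁ ∖ x₁`;
(b) consequently `x₁ ⊆ x₂` and `y₂ ∖ x₂ ⊆ y₁ ∖ x₁`. -/
theorem stmt5 {A : Type*} [Fintype A] (x₁ y₁ x₂ y₂ : A → A → Prop)
    (h₁ : IsDoubleOrder x₁ y₁) (h₂ : IsDoubleOrder x₂ y₂)
    (hx : ∀ a b, x₁ a b → x₂ a b) (hy : ∀ a b, y₁ a b → y₂ a b) :
    (∀ a b, dminus y₂ x₂ a b ↔ dminus y₁ x₂ a b) ∧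
    (∀ a b, dminus y₁ x₂ a b → dminus y₁ x₁ a b) ∧
    ((∀ a b, x₁ a b → x₂ a b) ∧ (∀ a b, dminus y₂ x₂ a b → dminus y₁ x₁ a b)) := by
  have : Std.Asymm y₂ := h₂.2.1.asymm
  exact stmt5_general x₁ y₁ x₂ y₂ h₁.2.2 hx hy
end

section
/- Let <*₁ = (x<₁, y<₁) and <*₂ = (x<₂, y<₂) be regular double orders on a finite set A with x<₁ ⊆ x<₂ and y<₂ ⊆ y<₁. Then the pair (x<₂, y<₁) is a semi-regular double order on A, and y<₁ ∖ x<₂ = y<₂ (that is, for all a, b ∈ A: a y<₁ b together with a and b being x<₂-incomparable holds iff a y<₂ b). -/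
variable {A : Type*}

/-!
Since `x₁ ⊆ x₂` and `y₂ ⊆ y₁`, the componentwise union of the two given regular double orders is
already `(x₂, y₁)`: each component is the larger of two transitive relations. If `a y₁ b` with `a`
and `b` `x₂`-incomparable, then they are `y₂`-comparable, and `b y₂ a` is impossible because it
would give `b y₁ a`. Conversely, a `y₂`-related pair is `x₂`-incomparable by regularity.
-/

theorem transGen_exists_iff_of_forall_le {ι : Type*} {r : ι → A → A → Prop} {i : ι}
    (htrans : ∀ a b c, r i a b → r i b c → r i a c) (hle : ∀ j a b, r j a b → r i a b) (a b : A) :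
    Relation.TransGen (fun u v => ∃ j, r j u v) a b ↔ r i a b :=
  haveI : IsTrans A (r i) := ⟨htrans⟩
  have hsup : (fun u v => ∃ j, r j u v) ≤ r i := fun u v ⟨j, h⟩ => hle j u v h
  ⟨Relation.transGen_minimal hsup a b, fun h => .single ⟨i, h⟩⟩

theorem isSemiRegular_of_forall_le {k : ℕ} {xs ys : Fin k → A → A → Prop}
    (hreg : ∀ n, IsRegularDO (xs n) (ys n)) {i j : Fin k}
    (hx : ∀ n a b, xs n a b → xs i a b) (hy : ∀ n a b, ys n a b → ys j a b) :
    IsSemiRegular (xs i) (ys j) := by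
  obtain ⟨⟨⟨hx_irrefl, hx_trans⟩, -, -⟩, -, -⟩ := hreg i
  obtain ⟨⟨-, ⟨hy_irrefl, hy_trans⟩, -⟩, -, -⟩ := hreg j
  exact ⟨hx_irrefl, hy_irrefl, k, i.pos, xs, ys, hreg,
    fun a b => (transGen_exists_iff_of_forall_le hx_trans hx a b).symm,
    fun a b => (transGen_exists_iff_of_forall_le hy_trans hy a b).symm⟩

theorem IsRegularDO.isSemiRegular_of_le {x₁ y₁ x₂ y₂ : A → A → Prop}
    (h₁ : IsRegularDO x₁ y₁) (h₂ : IsRegularDO x₂ y₂)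
    (hx : ∀ a b, x₁ a b → x₂ a b) (hy : ∀ a b, y₂ a b → y₁ a b) : IsSemiRegular x₂ y₁ :=
  isSemiRegular_of_forall_le (xs := ![x₁, x₂]) (ys := ![y₁, y₂]) (i := 1) (j := 0)
    (Fin.forall_fin_two.2 ⟨h₁, h₂⟩)
    (Fin.forall_fin_two.2 ⟨hx, fun _ _ => id⟩) (Fin.forall_fin_two.2 ⟨fun _ _ => id, hy⟩)

theorem StrictPO.ne {r : A → A → Prop} (hr : StrictPO r) {a b : A} (hab : r a b) : a ≠ b :=
  fun h => hr.1 b (h ▸ hab)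

theorem StrictPO.asymm_s6 {r : A → A → Prop} (hr : StrictPO r) {a b : A} (hab : r a b) : ¬ r b a :=
  fun hba => hr.1 a (hr.2 a b a hab hba)

theorem IsDoubleOrder.of_dminus {x y y' : A → A → Prop} (hxy : IsDoubleOrder x y)
    (hy' : StrictPO y') (hle : ∀ a b, y a b → y' a b) {a b : A} (hab : dminus y' x a b) :
    y a b := by
  obtain ⟨hab, hx_ab, hx_ba⟩ := hab
  rcases hxy.2.2 a b (hy'.ne hab) with h | h | h | h
  · exact absurd h hx_ab
  · exact absurd h hx_ba
  · exact h
  · exact absurd (hle b a h) (hy'.asymm_s6 hab)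

theorem dminus_of_le {x y y' : A → A → Prop} (hinc : ∀ a b, x a b → ¬ y a b ∧ ¬ y b a)
    (hle : ∀ a b, y a b → y' a b) {a b : A} (hab : y a b) : dminus y' x a b :=
  ⟨hle a b hab, fun hx => (hinc a b hx).1 hab, fun hx => (hinc b a hx).2 hab⟩

theorem IsRegularDO.dminus_iff {x y y' : A → A → Prop} (hxy : IsRegularDO x y)
    (hy' : StrictPO y') (hle : ∀ a b, y a b → y' a b) (a b : A) : dminus y' x a b ↔ y a b :=
  ⟨hxy.1.of_dminus hy' hle, dminus_of_le hxy.2.2 hle⟩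

theorem stmt6_general {x₁ y₁ x₂ y₂ : A → A → Prop}
    (h₁ : IsRegularDO x₁ y₁) (h₂ : IsRegularDO x₂ y₂)
    (hx : ∀ a b, x₁ a b → x₂ a b) (hy : ∀ a b, y₂ a b → y₁ a b) :
    IsSemiRegular x₂ y₁ ∧ (∀ a b, dminus y₁ x₂ a b ↔ y₂ a b) :=
  ⟨h₁.isSemiRegular_of_le h₂ hx hy, h₂.dminus_iff h₁.1.2.1 hy⟩

/-- If `(x₁,y₁)` and `(x₂,y₂)` are regular double orders on a finite
set with `x₁ ⊆ x₂` and `y₂ ⊆ y₁`, then `(x₂, y₁)` is a semi-regular double order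
and `y₁ ∖ x₂ = y₂`. -/
theorem stmt6 {A : Type*} [Fintype A] (x₁ y₁ x₂ y₂ : A → A → Prop)
    (h₁ : IsRegularDO x₁ y₁) (h₂ : IsRegularDO x₂ y₂)
    (hx : ∀ a b, x₁ a b → x₂ a b) (hy : ∀ a b, y₂ a b → y₁ a b) :
    IsSemiRegular x₂ y₁ ∧ (∀ a b, dminus y₁ x₂ a b ↔ y₂ a b) :=
  stmt6_general h₁ h₂ hx hy
end

section
/- For every double order <* on a finite set A, the set U(<*) is a nonempty, open, and convex subset of the space of functions A → ℝ², and every f ∈ U(<*) is injective (so U(<*) is contained in the ordered configuration space OConf(A, ℝ²) of injective maps A → ℝ²). -/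
variable {A : Type*}

/-- The strictly monotone functions from `A`, with the relation `r`, to the ordered type `α`.
`USet x y` is cut out by this condition on each of the two coordinates. A set of functions is used
rather than the type `r →r (· < ·)`, so that one can ask whether it is open or convex in `A → α`. -/
def strictMonoSet {α : Type*} [LT α] (r : A → A → Prop) : Set (A → α) :=
  {f | ∀ a b, r a b → f a < f b}

theorem StrictPO.nonempty_strictMonoSet [Countable A] {α : Type*} [LinearOrder α]
    [DenselyOrdered α] [Nontrivial α] {r : A → A → Prop} (hr : StrictPO r) :
    (strictMonoSet r : Set (A → α)).Nonempty := by
  have : IsStrictOrder A r := { irrefl := hr.1, trans := hr.2 }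
  let _ : PartialOrder A := partialOrderOfSO r
  have : Countable (LinearExtension A) := inferInstanceAs (Countable A)
  have toLinearExtension_strictMono : StrictMono (toLinearExtension : A →o LinearExtension A) :=
    toLinearExtension.monotone.strictMono_of_injective Function.injective_id
  obtain ⟨e⟩ := Order.embedding_from_countable_to_dense (LinearExtension A) α
  exact ⟨e ∘ toLinearExtension, fun _ _ hab =>
    e.strictMono (toLinearExtension_strictMono hab)⟩

theorem isOpen_strictMonoSet [Finite A] {α : Type*} [LinearOrder α] [TopologicalSpace α]
    [OrderClosedTopology α] (r : A → A → Prop) : IsOpen (strictMonoSet r : Set (A → α)) := by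
  simp only [strictMonoSet, Set.ofPred_forall]
  exact isOpen_iInter_of_finite fun a => isOpen_iInter_of_finite fun b =>
    isOpen_iInter_of_finite fun _ => isOpen_lt (continuous_apply a) (continuous_apply b)

theorem convex_strictMonoSet (𝕜 : Type*) {E : Type*} [Semiring 𝕜] [PartialOrder 𝕜]
    [AddCommMonoid E] [PartialOrder E] [IsOrderedCancelAddMonoid E] [Module 𝕜 E]
    [PosSMulStrictMono 𝕜 E] (r : A → A → Prop) : Convex 𝕜 (strictMonoSet r : Set (A → E)) :=
  convex_iff_forall_pos.2 fun _ hf _ hg _ _ hs ht _ a b hab =>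
    add_lt_add (smul_lt_smul_of_pos_left (hf a b hab) hs)
      (smul_lt_smul_of_pos_left (hg a b hab) ht)

theorem ne_of_mem_strictMonoSet {α : Type*} [Preorder α] {r : A → A → Prop} {f : A → α}
    (hf : f ∈ strictMonoSet r) {a b : A} (hab : r a b ∨ r b a) : f a ≠ f b :=
  hab.elim (fun h => (hf a b h).ne) fun h => (hf b a h).ne'

theorem mem_USet_iff {x y : A → A → Prop} {f : A → ℝ × ℝ} :
    f ∈ USet x y ↔ Prod.fst ∘ f ∈ strictMonoSet x ∧ Prod.snd ∘ f ∈ strictMonoSet y := by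
  simp only [USet, strictMonoSet, Set.mem_ofPred_eq, forall_and, Function.comp_apply]

theorem USet_eq_inter_preimage (x y : A → A → Prop) :
    USet x y = (Prod.fst ∘ ·) ⁻¹' strictMonoSet x ∩ (Prod.snd ∘ ·) ⁻¹' strictMonoSet y :=
  Set.ext fun _ => mem_USet_iff

theorem nonempty_USet [Countable A] {x y : A → A → Prop} (hx : StrictPO x) (hy : StrictPO y) :
    (USet x y).Nonempty := by
  obtain ⟨g, hg⟩ := hx.nonempty_strictMonoSet (α := ℝ)
  obtain ⟨h, hh⟩ := hy.nonempty_strictMonoSet (α := ℝ)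
  exact ⟨fun a => (g a, h a), mem_USet_iff.2 ⟨hg, hh⟩⟩

theorem isOpen_USet [Finite A] (x y : A → A → Prop) : IsOpen (USet x y) := by
  rw [USet_eq_inter_preimage]
  exact ((isOpen_strictMonoSet x).preimage (by fun_prop)).inter
    ((isOpen_strictMonoSet y).preimage (by fun_prop))

theorem convex_USet (x y : A → A → Prop) : Convex ℝ (USet x y) := by
  rw [USet_eq_inter_preimage]
  exact ((convex_strictMonoSet ℝ x).linear_preimage ((LinearMap.fst ℝ ℝ ℝ).compLeft A)).inter
    ((convex_strictMonoSet ℝ y).linear_preimage ((LinearMap.snd ℝ ℝ ℝ).compLeft A))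

theorem injective_of_mem_USet {x y : A → A → Prop}
    (hxy : ∀ a b, a ≠ b → x a b ∨ x b a ∨ y a b ∨ y b a) {f : A → ℝ × ℝ} (hf : f ∈ USet x y) :
    Function.Injective f := by
  obtain ⟨hfx, hfy⟩ := mem_USet_iff.1 hf
  intro a b hab
  by_contra hne
  rcases or_assoc.2 (hxy a b hne) with hx | hy
  · exact ne_of_mem_strictMonoSet hfx hx (congrArg Prod.fst hab)
  · exact ne_of_mem_strictMonoSet hfy hy (congrArg Prod.snd hab)

/-- For every double order `(x,y)` on a finite set `A`, the set
`U(<*)` is a nonempty, open, convex subset of the space of functions `A → ℝ²`,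
and every `f ∈ U(<*)` is injective (so `U(<*) ⊆ OConf(A, ℝ²)`). -/
theorem stmt7 {A : Type*} [Fintype A] (x y : A → A → Prop)
    (hd : IsDoubleOrder x y) :
    (USet x y).Nonempty ∧ IsOpen (USet x y) ∧ Convex ℝ (USet x y) ∧
      ∀ f ∈ USet x y, Function.Injective f := by
  obtain ⟨hx, hy, hxy⟩ := hd
  exact ⟨nonempty_USet hx hy, isOpen_USet x y, convex_USet x y,
    fun _ hf => injective_of_mem_USet hxy hf⟩
end

section
/- Let <*₁, …, <*_k (k ≥ 1) be double orders on a finite set A, and let x< and y< be the transitive closures of ⋃ᵢ x<ᵢ and ⋃ᵢ y<ᵢ respectively. If both x< and y< are irreflexive, then (x<, y<) is a double order and ⋂ᵢ U(<*ᵢ) = U((x<, y<)); otherwise ⋂ᵢ U(<*ᵢ) = ∅. -/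
variable {A : Type*}

section TransGen

open Relation

variable {r s : A → A → Prop}

theorem strictPO_transGen (h : ∀ a, ¬ TransGen r a a) : StrictPO (TransGen r) :=
  ⟨h, fun _ _ _ => TransGen.trans⟩

theorem isDoubleOrder_transGen (hr : ∀ a, ¬ TransGen r a a) (hs : ∀ a, ¬ TransGen s a a)
    (hrs : ∀ a b, a ≠ b → r a b ∨ r b a ∨ s a b ∨ s b a) :
    IsDoubleOrder (TransGen r) (TransGen s) :=
  ⟨strictPO_transGen hr, strictPO_transGen hs, fun a b hab =>
    (hrs a b hab).imp .single <| Or.imp .single <| Or.imp .single .single⟩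

theorem lt_of_transGen {α : Type*} [Preorder α] {g : A → α} (hg : ∀ a b, r a b → g a < g b)
    {a b : A} (hab : TransGen r a b) : g a < g b :=
  transGen_minimal (r' := Function.onFun (· < ·) g) hg a b hab

theorem USet_transGen (r s : A → A → Prop) : USet (TransGen r) (TransGen s) = USet r s := by
  ext f
  constructor
  · exact fun hf a b => ⟨fun h => (hf a b).1 (.single h), fun h => (hf a b).2 (.single h)⟩
  · exact fun hf a b => ⟨lt_of_transGen (g := fun a => (f a).1) fun a b => (hf a b).1,
      lt_of_transGen (g := fun a => (f a).2) fun a b => (hf a b).2⟩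

end TransGen

theorem iInter_USet {ι : Sort*} (xs ys : ι → A → A → Prop) :
    ⋂ i, USet (xs i) (ys i) = USet (fun a b => ∃ i, xs i a b) (fun a b => ∃ i, ys i a b) := by
  ext f
  rw [Set.mem_iInter]
  constructor
  · exact fun hf a b => ⟨fun ⟨i, h⟩ => (hf i a b).1 h, fun ⟨i, h⟩ => (hf i a b).2 h⟩
  · exact fun hf i a b => ⟨fun h => (hf a b).1 ⟨i, h⟩, fun h => (hf a b).2 ⟨i, h⟩⟩

theorem irrefl_of_mem_USet {x y : A → A → Prop} {f : A → ℝ × ℝ} (hf : f ∈ USet x y) :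
    (∀ a, ¬ x a a) ∧ (∀ a, ¬ y a a) :=
  ⟨fun a h => lt_irrefl _ ((hf a a).1 h), fun a h => lt_irrefl _ ((hf a a).2 h)⟩

theorem stmt8_general {ι : Sort*} (xs ys : ι → A → A → Prop)
    (hcomp : ∀ a b, a ≠ b → ∃ i, xs i a b ∨ xs i b a ∨ ys i a b ∨ ys i b a) :
    ((∀ a, ¬ Relation.TransGen (fun u v => ∃ i, xs i u v) a a) ∧
     (∀ a, ¬ Relation.TransGen (fun u v => ∃ i, ys i u v) a a) →
      IsDoubleOrder (Relation.TransGen (fun u v => ∃ i, xs i u v))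
        (Relation.TransGen (fun u v => ∃ i, ys i u v)) ∧
      (⋂ i, USet (xs i) (ys i)) =
        USet (Relation.TransGen (fun u v => ∃ i, xs i u v))
          (Relation.TransGen (fun u v => ∃ i, ys i u v))) ∧
    (¬ ((∀ a, ¬ Relation.TransGen (fun u v => ∃ i, xs i u v) a a) ∧
        (∀ a, ¬ Relation.TransGen (fun u v => ∃ i, ys i u v) a a)) →
      (⋂ i, USet (xs i) (ys i)) = ∅) := by
  rw [iInter_USet, ← USet_transGen]
  refine ⟨fun ⟨hx, hy⟩ => ⟨isDoubleOrder_transGen hx hy ?_, rfl⟩, fun hirr => ?_⟩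
  · simpa only [exists_or] using hcomp
  · exact Set.eq_empty_of_forall_notMem fun f hf => hirr (irrefl_of_mem_USet hf)

/-- Let `<*₁,…,<*_k` (`k ≥ 1`) be double orders on a finite set `A`
and let `x`, `y` be the transitive closures of the unions of their components.
If both `x` and `y` are irreflexive then `(x,y)` is a double order and
`⋂ᵢ U(<*ᵢ) = U((x,y))`; otherwise `⋂ᵢ U(<*ᵢ) = ∅`. -/
theorem stmt8 {A : Type*} [Fintype A] (k : ℕ) (hk : 0 < k)
    (xs ys : Fin k → (A → A → Prop))
    (hdo : ∀ i, IsDoubleOrder (xs i) (ys i)) :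
    ((∀ a, ¬ Relation.TransGen (fun u v => ∃ i, xs i u v) a a) ∧
     (∀ a, ¬ Relation.TransGen (fun u v => ∃ i, ys i u v) a a) →
      IsDoubleOrder (Relation.TransGen (fun u v => ∃ i, xs i u v))
        (Relation.TransGen (fun u v => ∃ i, ys i u v)) ∧
      (⋂ i, USet (xs i) (ys i)) =
        USet (Relation.TransGen (fun u v => ∃ i, xs i u v))
          (Relation.TransGen (fun u v => ∃ i, ys i u v))) ∧
    (¬ ((∀ a, ¬ Relation.TransGen (fun u v => ∃ i, xs i u v) a a) ∧
        (∀ a, ¬ Relation.TransGen (fun u v => ∃ i, ys i u v) a a)) →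
      (⋂ i, USet (xs i) (ys i)) = ∅) :=
  stmt8_general xs ys fun a b hab => ⟨⟨0, hk⟩, (hdo _).2.2 a b hab⟩
end

section
/- Let <*₁, …, <*_k be double orders on a finite set A. If the intersection ⋂ᵢ U(<*ᵢ) is nonempty, then it is a convex subset of the space of functions A → ℝ² and, with the subspace topology, it is a contractible topological space. In particular, every nonempty intersection of sets of the form U(<*) is contractible (the cover by the sets U(<*) is good). -/
variable {A : Type*}

section StrictInequalities

variable {𝕜 β : Type*} [Semiring 𝕜] [PartialOrder 𝕜] [ZeroLEOneClass 𝕜]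
  [AddCommMonoid β] [PartialOrder β] [IsOrderedCancelAddMonoid β]
  [Module 𝕜 β] [PosSMulStrictMono 𝕜 β]

theorem convex_setOf_fst_lt_snd : Convex 𝕜 {p : β × β | p.1 < p.2} := by
  simpa only [id, Set.mem_univ, true_and] using
    (convexOn_id (𝕜 := 𝕜) (β := β) convex_univ).convex_strict_epigraph

theorem convex_setOf_forall_rel_imp_lt (r : A → A → Prop) :
    Convex 𝕜 {f : A → β | ∀ a b, r a b → f a < f b} := by
  simp only [Set.ofPred_forall]
  refine convex_iInter₂ fun a b => convex_iInter fun _ => ?_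
  exact convex_setOf_fst_lt_snd.linear_preimage
    ((LinearMap.proj a).prod (LinearMap.proj b) : (A → β) →ₗ[𝕜] β × β)

end StrictInequalities

theorem USet_eq_preimage_inter_preimage (x y : A → A → Prop) :
    USet x y =
      (LinearMap.fst ℝ ℝ ℝ).compLeft A ⁻¹' {g | ∀ a b, x a b → g a < g b} ∩
        (LinearMap.snd ℝ ℝ ℝ).compLeft A ⁻¹' {g | ∀ a b, y a b → g a < g b} := by
  ext f
  simp only [USet, Set.mem_ofPred_eq, forall_and, Set.mem_inter_iff, Set.mem_preimage,
    LinearMap.compLeft_apply, Function.comp_apply, LinearMap.fst_apply, LinearMap.snd_apply]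

theorem stmt9_general {ι : Sort*} (xs ys : ι → A → A → Prop)
    (hne : (⋂ i, USet (xs i) (ys i)).Nonempty) :
    Convex ℝ (⋂ i, USet (xs i) (ys i)) ∧
      ContractibleSpace ↥(⋂ i, USet (xs i) (ys i)) :=
  have hconv : Convex ℝ (⋂ i, USet (xs i) (ys i)) :=
    convex_iInter fun i => convex_USet (xs i) (ys i)
  ⟨hconv, hconv.contractibleSpace hne⟩

/-- Any nonempty intersection of sets `U(<*ᵢ)` associated to double
orders on a finite set `A` is convex and (with the subspace topology) contractible:
the cover by the sets `U(<*)` is good. -/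
theorem stmt9 {A : Type*} [Fintype A] (k : ℕ)
    (xs ys : Fin k → (A → A → Prop))
    (hdo : ∀ i, IsDoubleOrder (xs i) (ys i))
    (hne : (⋂ i, USet (xs i) (ys i)).Nonempty) :
    Convex ℝ (⋂ i, USet (xs i) (ys i)) ∧
      ContractibleSpace ↥(⋂ i, USet (xs i) (ys i)) :=
  stmt9_general xs ys hne
end

section
/- Let A be a finite set and f = (f_x, f_y) : A → ℝ² an injective function. Define relations on A by: a x<_f b iff f_x(a) < f_x(b), and a y<_f b iff f_x(a) = f_x(b) and f_y(a) < f_y(b). Then (x<_f, y<_f) is a regular double order on A and f ∈ U((x<_f, y<_f)). In particular, the sets U(<*), for <* ranging over regular double orders on A, cover the ordered configuration space of injective maps A → ℝ². -/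
variable {A : Type*}

/-!
The union of `x<_f` and `y<_f` is the lexicographic order pulled back along `f`. That order is
linear, so injectivity of `f` makes any two distinct elements comparable. Semi-linearity of `x<_f`
comes from numbering the finitely many values of `f_x` in increasing order.
-/

section InducedOrders

variable {α β : Type*}

/-- The relation `x<_f` induced by `f = (f_x, f_y)`. The codomain `α × β` takes the place of `ℝ²`,
since only the orders of the two factors matter. -/
def xLT [LT α] (f : A → α × β) (a b : A) : Prop :=
  (f a).1 < (f b).1

/-- The relation `y<_f` induced by `f = (f_x, f_y)`. It compares second coordinates only inside a
fibre of `f_x`, so that it never relates elements that `x<_f` already compares. -/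
def yLT [LT β] (f : A → α × β) (a b : A) : Prop :=
  (f a).1 = (f b).1 ∧ (f a).2 < (f b).2

theorem strictPO_xLT [Preorder α] (f : A → α × β) : StrictPO (xLT f) :=
  ⟨fun _ => lt_irrefl _, fun _ _ _ => lt_trans⟩

theorem strictPO_yLT [Preorder β] (f : A → α × β) : StrictPO (yLT f) :=
  ⟨fun _ h => lt_irrefl _ h.2, fun _ _ _ hab hbc => ⟨hab.1.trans hbc.1, hab.2.trans hbc.2⟩⟩

theorem xLT_or_yLT_iff_toLex_lt [LT α] [LT β] {f : A → α × β} {a b : A} :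
    xLT f a b ∨ yLT f a b ↔ toLex (f a) < toLex (f b) :=
  Prod.Lex.toLex_lt_toLex.symm

theorem isDoubleOrder_xLT_yLT [LinearOrder α] [LinearOrder β] {f : A → α × β}
    (hf : Function.Injective f) : IsDoubleOrder (xLT f) (yLT f) := by
  refine ⟨strictPO_xLT f, strictPO_yLT f, fun a b hab => ?_⟩
  have hne : toLex (f a) ≠ toLex (f b) := toLex.injective.ne (hf.ne hab)
  rcases hne.lt_or_gt with hlt | hgt
  · have hab' : xLT f a b ∨ yLT f a b := xLT_or_yLT_iff_toLex_lt.mpr hlt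
    tauto
  · have hba' : xLT f b a ∨ yLT f b a := xLT_or_yLT_iff_toLex_lt.mpr hgt
    tauto

theorem semiLinear_lt_of_finite_range [LinearOrder α] {g : A → α} (hg : (Set.range g).Finite) :
    SemiLinear fun a b => g a < g b := by
  have : Fintype (Set.range g) := hg.fintype
  let rank : Set.range g ≃o Fin (Fintype.card (Set.range g)) :=
    (Fintype.orderIsoFinOfCardEq (Set.range g) rfl).symm
  exact ⟨_, rank ∘ Set.rangeFactorization g,
    rank.surjective.comp Set.rangeFactorization_surjective, fun a b =>
      (rank.lt_iff_lt (x := Set.rangeFactorization g a) (y := Set.rangeFactorization g b)).symm⟩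

theorem not_yLT_of_xLT [Preorder α] [LT β] {f : A → α × β} {a b : A} (h : xLT f a b) :
    ¬ yLT f a b ∧ ¬ yLT f b a :=
  ⟨fun hab => h.ne hab.1, fun hba => h.ne' hba.1⟩

theorem isRegularDO_xLT_yLT [LinearOrder α] [LinearOrder β] {f : A → α × β}
    (hx : (Set.range fun a => (f a).1).Finite) (hf : Function.Injective f) :
    IsRegularDO (xLT f) (yLT f) :=
  ⟨isDoubleOrder_xLT_yLT hf, semiLinear_lt_of_finite_range hx, fun _ _ => not_yLT_of_xLT⟩

end InducedOrders

theorem mem_USet_xLT_yLT (f : A → ℝ × ℝ) : f ∈ USet (xLT f) (yLT f) :=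
  fun _ _ => ⟨id, And.right⟩

theorem stmt10_general {f : A → ℝ × ℝ} (hx : (Set.range fun a => (f a).1).Finite)
    (hf : Function.Injective f) :
    IsRegularDO (xLT f) (yLT f) ∧ f ∈ USet (xLT f) (yLT f) :=
  ⟨isRegularDO_xLT_yLT hx hf, mem_USet_xLT_yLT f⟩

/-- For an injective `f = (f_x,f_y) : A → ℝ²` on a finite set `A`,
the relations `a x<_f b ↔ f_x a < f_x b` and
`a y<_f b ↔ (f_x a = f_x b ∧ f_y a < f_y b)` form a regular double order, and
`f ∈ U((x<_f, y<_f))`; in particular the sets `U(<*)`, for `<*` regular, cover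
the ordered configuration space of injective maps `A → ℝ²`. -/
theorem stmt10 {A : Type*} [Fintype A] (f : A → ℝ × ℝ)
    (hf : Function.Injective f) :
    IsRegularDO (fun a b => (f a).1 < (f b).1)
        (fun a b => (f a).1 = (f b).1 ∧ (f a).2 < (f b).2) ∧
      f ∈ USet (fun a b => (f a).1 < (f b).1)
        (fun a b => (f a).1 = (f b).1 ∧ (f a).2 < (f b).2) :=
  stmt10_general (Set.finite_range _) hf
end

section
/- Let <* be a semi-regular double order on a finite set A and let σ be a permutation of A that is not the identity. Then U(<*) ∩ U(<*σ) = ∅. (The cover of the configuration space by the sets U(<*), <* semi-regular, is a proper Σ_A-equivariant cover.) -/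
variable {A : Type*}

/-!
If a permutation `σ` never strictly reverses the order of the values of a function `g` along one of
its finite orbits, then `g` is constant on that orbit: once `g a < g (σ a)`, every later value stays
above `g a`, so the orbit never returns to `a`.

Now let `f ∈ U(<*) ∩ U(<*σ)`. The levels of a semi-linear order contained in `x<` are not reversed
by `σ`, because `f_x` would then have to both increase and decrease. So each finite orbit of `σ`
lies in a single level, where distinct points are `y<`-comparable, and this in turn prevents `σ`
from reversing `f_y`. Hence `f_y` is constant on the orbit, which must then be a single point.
-/

/-- No strict inequality between two terms of the sequence `u` is strictly reversed by shifting both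
indices by one. It is applied to the values of a function along an orbit, where it says that the map
generating the orbit does not reverse the order of these values. -/
def ShiftMonotone {L : Type*} [Preorder L] (u : ℕ → L) : Prop :=
  ∀ m n, u m < u n → u (m + 1) ≤ u (n + 1)

namespace ShiftMonotone

variable {L : Type*}

theorem dual [Preorder L] {u : ℕ → L} (hu : ShiftMonotone u) :
    ShiftMonotone (OrderDual.toDual ∘ u) :=
  fun m n hlt => hu n m hlt

theorem apply_lt_apply_add_succ [Preorder L] {u : ℕ → L} (hu : ShiftMonotone u) {k : ℕ}
    (hk : u k < u (k + 1)) (n : ℕ) : u k < u (k + n + 1) := by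
  induction n with
  | zero => exact hk
  | succ n ih => exact hk.trans_le (hu _ _ ih)

theorem not_apply_lt_apply_succ_of_periodic [Preorder L] {u : ℕ → L} (hu : ShiftMonotone u) {p : ℕ}
    (hp : 0 < p) (hper : Function.Periodic u p) (k : ℕ) : ¬ u k < u (k + 1) := by
  intro hk
  obtain ⟨n, rfl⟩ := Nat.exists_eq_add_one.2 hp
  exact (hu.apply_lt_apply_add_succ hk n).ne (hper k).symm

theorem apply_eq_apply_zero_of_periodic [LinearOrder L] {u : ℕ → L} (hu : ShiftMonotone u) {p : ℕ}
    (hp : 0 < p) (hper : Function.Periodic u p) (n : ℕ) : u n = u 0 := by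
  induction n with
  | zero => rfl
  | succ n ih =>
    have hle : u (n + 1) ≤ u n := not_lt.1 (hu.not_apply_lt_apply_succ_of_periodic hp hper n)
    have hge : u n ≤ u (n + 1) :=
      not_lt.1 <| hu.dual.not_apply_lt_apply_succ_of_periodic hp (hper.comp OrderDual.toDual) n
    exact (hle.antisymm hge).trans ih

theorem apply_iterate_eq_of_mem_periodicPts [LinearOrder L] {g : A → L} {σ : A → A} {a : A}
    (hg : ShiftMonotone fun n => g (σ^[n] a)) (ha : a ∈ Function.periodicPts σ) (n : ℕ) :
    g (σ^[n] a) = g a := by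
  obtain ⟨p, hp, hpa⟩ := ha
  have hper : Function.Periodic (fun n => g (σ^[n] a)) p := fun n =>
    congrArg g (by rw [Function.iterate_add_apply, hpa.eq])
  exact hg.apply_eq_apply_zero_of_periodic hp hper n

end ShiftMonotone

section USet

variable {L : Type*} [LinearOrder L] {x y : A → A → Prop} {h : A → L} {σ : Equiv.Perm A}
  {f : A → ℝ × ℝ}

theorem shiftMonotone_comp_iterate_of_mem_USet (hx : ∀ a b, h a < h b → x a b) (hf : f ∈ USet x y)
    (hfσ : f ∈ USet (permRel σ x) (permRel σ y)) (a : A) :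
    ShiftMonotone fun n => h (σ^[n] a) := by
  intro m n hlt
  simp only [Function.iterate_succ_apply']
  by_contra! hrev
  exact ((hf _ _).1 (hx _ _ hlt)).asymm ((hfσ _ _).1 (hx _ _ hrev))

theorem shiftMonotone_snd_iterate_of_mem_USet {a : A}
    (hy : ∀ m n, σ^[m] a ≠ σ^[n] a → y (σ^[m] a) (σ^[n] a) ∨ y (σ^[n] a) (σ^[m] a))
    (hf : f ∈ USet x y) (hfσ : f ∈ USet (permRel σ x) (permRel σ y)) :
    ShiftMonotone fun n => (f (σ^[n] a)).2 := by
  intro m n hlt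
  by_contra! hrev
  have hne : σ^[m + 1] a ≠ σ^[n + 1] a := fun heq => hrev.ne' (by rw [heq])
  rcases hy _ _ hne with hmn | hnm
  · exact hrev.asymm ((hf _ _).2 hmn)
  · simp only [Function.iterate_succ_apply'] at hnm
    exact hlt.asymm ((hfσ _ _).2 hnm)

end USet

/-- `h` is a level map for the pair `(x, y)`: the semi-linear order induced by `h` is contained in
`x`, and distinct elements of the same level are `y`-comparable. It serves to
confine the finite orbits of `σ` to single levels. The levels lie in an arbitrary linear order, and
`h` need not be surjective. -/
structure IsLevelMap {L : Type*} [LinearOrder L] (x y : A → A → Prop) (h : A → L) : Prop where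
  rel_of_lt : ∀ a b, h a < h b → x a b
  rel_or_rel_of_eq : ∀ a b, a ≠ b → h a = h b → y a b ∨ y b a

namespace IsLevelMap

variable {L : Type*} [LinearOrder L] {x y : A → A → Prop} {h : A → L}

theorem mono {x' y' : A → A → Prop} (hh : IsLevelMap x y h) (hx : x ≤ x') (hy : y ≤ y') :
    IsLevelMap x' y' h where
  rel_of_lt a b hlt := hx a b (hh.rel_of_lt a b hlt)
  rel_or_rel_of_eq a b hne heq := (hh.rel_or_rel_of_eq a b hne heq).imp (hy a b) (hy b a)

theorem apply_eq_self_of_mem_USet (hh : IsLevelMap x y h) {σ : Equiv.Perm A} {f : A → ℝ × ℝ}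
    (hf : f ∈ USet x y) (hfσ : f ∈ USet (permRel σ x) (permRel σ y)) {a : A}
    (ha : a ∈ Function.periodicPts σ) : σ a = a := by
  have hlevel_mono : ShiftMonotone fun n => h (σ^[n] a) :=
    shiftMonotone_comp_iterate_of_mem_USet hh.rel_of_lt hf hfσ a
  have hlevel : ∀ n, h (σ^[n] a) = h a := hlevel_mono.apply_iterate_eq_of_mem_periodicPts ha
  have hcomp : ∀ m n, σ^[m] a ≠ σ^[n] a → y (σ^[m] a) (σ^[n] a) ∨ y (σ^[n] a) (σ^[m] a) :=
    fun m n hne => hh.rel_or_rel_of_eq _ _ hne ((hlevel m).trans (hlevel n).symm)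
  have hsnd_mono : ShiftMonotone fun n => (f (σ^[n] a)).2 :=
    shiftMonotone_snd_iterate_of_mem_USet hcomp hf hfσ
  have hsnd : (f (σ a)).2 = (f a).2 :=
    hsnd_mono.apply_iterate_eq_of_mem_periodicPts (g := fun b => (f b).2) ha 1
  by_contra hne
  rcases hcomp 1 0 hne with hlt | hlt
  · exact ((hf _ _).2 hlt).ne hsnd
  · exact ((hf _ _).2 hlt).ne' hsnd

end IsLevelMap

theorem SemiLinear.exists_isLevelMap {x y : A → A → Prop} (hlin : SemiLinear x)
    (htot : ∀ a b, a ≠ b → x a b ∨ x b a ∨ y a b ∨ y b a) :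
    ∃ (l : ℕ) (h : A → Fin l), IsLevelMap x y h := by
  obtain ⟨l, h, -, hx⟩ := hlin
  refine ⟨l, h, fun a b => (hx a b).2, fun a b hne heq => ?_⟩
  rcases htot a b hne with hab | hba | hy
  · exact absurd heq ((hx a b).1 hab).ne
  · exact absurd heq ((hx b a).1 hba).ne'
  · exact hy

theorem IsSemiRegular.exists_isRegularDO_le {x y : A → A → Prop} (hxy : IsSemiRegular x y) :
    ∃ x₀ y₀ : A → A → Prop, IsRegularDO x₀ y₀ ∧ x₀ ≤ x ∧ y₀ ≤ y := by
  obtain ⟨-, -, k, hk, xs, ys, hreg, hx, hy⟩ := hxy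
  exact ⟨xs ⟨0, hk⟩, ys ⟨0, hk⟩, hreg _, fun a b hab => (hx a b).2 (.single ⟨_, hab⟩),
    fun a b hab => (hy a b).2 (.single ⟨_, hab⟩)⟩

theorem IsSemiRegular.exists_isLevelMap {x y : A → A → Prop} (hxy : IsSemiRegular x y) :
    ∃ (l : ℕ) (h : A → Fin l), IsLevelMap x y h := by
  obtain ⟨x₀, y₀, ⟨⟨-, -, htot⟩, hlin, -⟩, hx, hy⟩ := hxy.exists_isRegularDO_le
  obtain ⟨l, h, hh⟩ := hlin.exists_isLevelMap htot
  exact ⟨l, h, hh.mono hx hy⟩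

theorem stmt11_general {A L : Type*} [LinearOrder L] {x y : A → A → Prop} {h : A → L}
    (hh : IsLevelMap x y h) {σ : Equiv.Perm A} {a : A} (ha : a ∈ Function.periodicPts σ)
    (hσ : σ a ≠ a) : USet x y ∩ USet (permRel σ x) (permRel σ y) = ∅ :=
  Set.eq_empty_of_forall_notMem fun _ ⟨hf, hfσ⟩ => hσ (hh.apply_eq_self_of_mem_USet hf hfσ ha)

/-- If `<*` is a semi-regular double order on a finite set `A` and
`σ` is a non-identity permutation of `A`, then `U(<*) ∩ U(<*σ) = ∅`. -/
theorem stmt11 {A : Type*} [Fintype A] (x y : A → A → Prop)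
    (h : IsSemiRegular x y) (σ : Equiv.Perm A) (hσ : σ ≠ 1) :
    USet x y ∩ USet (permRel σ x) (permRel σ y) = ∅ := by
  obtain ⟨l, level, hlevel⟩ := h.exists_isLevelMap
  obtain ⟨a, ha⟩ := DFunLike.ne_iff.1 hσ
  exact stmt11_general hlevel (σ.injective.mem_periodicPts a) ha
end

section
/- Let <*₁ = (x<₁, y<₁) and <*₂ = (x<₂, y<₂) be semi-regular double orders on a finite set A. Then U(<*₁) ⊆ U(<*₂) if and only if x<₂ ⊆ x<₁ and y<₂ ⊆ y<₁ (i.e., <*₁ ⊇ <*₂ componentwise). -/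
variable {A : Type*}

/-! The inclusion `USet x₁ y₁ ⊆ USet x₂ y₂` is tested on functions with independent coordinates, so
it reduces to recovering a transitive relation `r` from its homomorphisms into `(ℝ, <)`. If `r a b`
fails, then raising a given homomorphism by a large constant on the up-set `{c | c = a ∨ r a c}`
brings `a` at least as high as `b` without destroying monotonicity. On a countable set a strict
order has such a homomorphism: embed a linear extension into the dense order `ℝ`. -/

section RelHom

variable {α : Type*} {r : A → A → Prop}

theorem exists_relHom_lt_apply_le [IsTrans A r] [AddCommGroup α] [Lattice α] [IsOrderedAddMonoid α]
    (g : r →r ((· < ·) : α → α → Prop)) {a b : A} (hab : ¬ r a b) :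
    ∃ f : r →r ((· < ·) : α → α → Prop), f b ≤ f a := by
  classical
  let shift : A → α := fun c => if c = a ∨ r a c then (g b - g a)⁺ else 0
  have shift_le {c d : A} (hcd : r c d) : shift c ≤ shift d := by
    by_cases hc : c = a ∨ r a c
    · have hd : d = a ∨ r a d := Or.inr (hc.elim (fun h => h ▸ hcd) fun h => _root_.trans h hcd)
      simp only [shift, if_pos hc, if_pos hd, le_refl]
    · simp only [shift, if_neg hc]
      split_ifs
      exacts [posPart_nonneg _, le_rfl]
  refine ⟨⟨fun c => g c + shift c, fun hcd =>
    add_lt_add_of_lt_of_le (g.map_rel hcd) (shift_le hcd)⟩, ?_⟩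
  change g b + shift b ≤ g a + shift a
  obtain rfl | hba := eq_or_ne b a
  · rfl
  · have shift_a : shift a = (g b - g a)⁺ := if_pos (Or.inl rfl)
    have shift_b : shift b = 0 := if_neg (not_or.mpr ⟨hba, hab⟩)
    rw [shift_a, shift_b, add_zero, ← sub_le_iff_le_add']
    exact le_posPart _

theorem rel_iff_forall_relHom_lt [IsTrans A r] [AddCommGroup α] [Lattice α] [IsOrderedAddMonoid α]
    (g : r →r ((· < ·) : α → α → Prop)) {a b : A} :
    r a b ↔ ∀ f : r →r ((· < ·) : α → α → Prop), f a < f b := by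
  refine ⟨fun hab f => f.map_rel hab, fun h => ?_⟩
  by_contra hab
  obtain ⟨f, hf⟩ := exists_relHom_lt_apply_le g hab
  exact (h f).not_ge hf

theorem nonempty_relHom_lt_of_countable [Countable A] [IsStrictOrder A r] [LinearOrder α]
    [DenselyOrdered α] [Nontrivial α] : Nonempty (r →r ((· < ·) : α → α → Prop)) := by
  let _ : PartialOrder A := partialOrderOfSO r
  have : Countable (LinearExtension A) := ‹Countable A›
  obtain ⟨e⟩ := Order.embedding_from_countable_to_dense (LinearExtension A) α
  have strictMono_ext : StrictMono (toLinearExtension : A →o LinearExtension A) :=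
    toLinearExtension.monotone.strictMono_of_injective Function.injective_id
  exact ⟨⟨fun a => e (toLinearExtension a), fun hab => e.strictMono (strictMono_ext hab)⟩⟩

end RelHom

theorem mem_uSet_iff_exists_relHom {x y : A → A → Prop} {f : A → ℝ × ℝ} :
    f ∈ USet x y ↔ ∃ (g : x →r ((· < ·) : ℝ → ℝ → Prop)) (h : y →r ((· < ·) : ℝ → ℝ → Prop)),
      f = fun a => (g a, h a) := by
  refine ⟨fun hf => ⟨⟨fun a => (f a).1, (hf _ _).1⟩, ⟨fun a => (f a).2, (hf _ _).2⟩, rfl⟩, ?_⟩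
  rintro ⟨g, h, rfl⟩ a b
  exact ⟨g.map_rel, h.map_rel⟩

theorem uSet_nonempty_of_countable [Countable A] (x y : A → A → Prop) [IsStrictOrder A x]
    [IsStrictOrder A y] : (USet x y).Nonempty := by
  obtain ⟨g⟩ := nonempty_relHom_lt_of_countable (r := x) (α := ℝ)
  obtain ⟨h⟩ := nonempty_relHom_lt_of_countable (r := y) (α := ℝ)
  exact ⟨_, mem_uSet_iff_exists_relHom.mpr ⟨g, h, rfl⟩⟩

theorem isStrictOrder_of_iff_transGen {r s : A → A → Prop} (irrefl : ∀ a, ¬ r a a)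
    (h : ∀ a b, r a b ↔ Relation.TransGen s a b) : IsStrictOrder A r where
  irrefl := irrefl
  trans a b c hab hbc := (h a c).mpr (((h a b).mp hab).trans ((h b c).mp hbc))

theorem IsSemiRegular.isStrictOrder {x y : A → A → Prop} (h : IsSemiRegular x y) :
    IsStrictOrder A x ∧ IsStrictOrder A y := by
  obtain ⟨hx, hy, _, _, _, _, _, hxs, hys⟩ := h
  exact ⟨isStrictOrder_of_iff_transGen hx hxs, isStrictOrder_of_iff_transGen hy hys⟩

theorem stmt12_general {A : Type*} (x₁ y₁ x₂ y₂ : A → A → Prop) [IsTrans A x₁] [IsTrans A y₁]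
    (hne : (USet x₁ y₁).Nonempty) :
    USet x₁ y₁ ⊆ USet x₂ y₂ ↔
      ((∀ a b, x₂ a b → x₁ a b) ∧ (∀ a b, y₂ a b → y₁ a b)) := by
  constructor
  · intro hU
    obtain ⟨g, h, -⟩ := mem_uSet_iff_exists_relHom.mp hne.some_mem
    have pair_mem (g' : x₁ →r ((· < ·) : ℝ → ℝ → Prop)) (h' : y₁ →r ((· < ·) : ℝ → ℝ → Prop)) :
        (fun a => (g' a, h' a)) ∈ USet x₂ y₂ :=
      hU (mem_uSet_iff_exists_relHom.mpr ⟨g', h', rfl⟩)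
    exact ⟨fun a b hab => (rel_iff_forall_relHom_lt g).mpr fun g' => (pair_mem g' h a b).1 hab,
      fun a b hab => (rel_iff_forall_relHom_lt h).mpr fun h' => (pair_mem g h' a b).2 hab⟩
  · rintro ⟨hx, hy⟩ f hf a b
    exact ⟨fun hab => (hf a b).1 (hx a b hab), fun hab => (hf a b).2 (hy a b hab)⟩

/-- For semi-regular double orders `<*₁ = (x₁,y₁)` and
`<*₂ = (x₂,y₂)` on a finite set `A`, one has `U(<*₁) ⊆ U(<*₂)` iff
`x₂ ⊆ x₁` and `y₂ ⊆ y₁` (i.e. `<*₁ ⊇ <*₂` componentwise). -/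
theorem stmt12 {A : Type*} [Fintype A] (x₁ y₁ x₂ y₂ : A → A → Prop)
    (h₁ : IsSemiRegular x₁ y₁) (h₂ : IsSemiRegular x₂ y₂) :
    USet x₁ y₁ ⊆ USet x₂ y₂ ↔
      ((∀ a b, x₂ a b → x₁ a b) ∧ (∀ a b, y₂ a b → y₁ a b)) := by
  obtain ⟨_, _⟩ := h₁.isStrictOrder
  exact stmt12_general x₁ y₁ x₂ y₂ (uSet_nonempty_of_countable x₁ y₁)
end

section
/- Let p, q ≥ 0, V ⊆ {1,…,p}, W ⊆ {1,…,q} with p − |V| = q − |W|, and set s = p + |W| = q + |V|. Then there exist subsets V', W' ⊆ {1,…,s} with |V'| = |V| and |W'| = |W| such that δ⁰_{W'} ∘ δ¹_V = δ¹_{V'} ∘ δ⁰_W as maps ℝ^{p−|V|} → ℝ^s. -/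
/-- The geometric face/insertion map `δ^ε_V : ℝ^m → ℝ^n` for a subset
`V ⊆ {1,…,n}` whose complement has `m` elements: the coordinates at positions in
`V` are set to `ε` and the remaining coordinates are filled in, in increasing
order of position, by the coordinates of the argument. -/
def deltaMap {m n : ℕ} (V : Finset (Fin n)) (h : Vᶜ.card = m) (ε : ℝ)
    (x : Fin m → ℝ) : Fin n → ℝ :=
  fun i =>
    if hi : i ∈ V then ε
    else x ((Vᶜ.orderIsoOfFin h).symm ⟨i, Finset.mem_compl.mpr hi⟩)

/-!
The map `δ^ε_V` extends a function along the increasing enumeration of the complement of `V` by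
the constant `ε`. So `V` and `W` are two embeddings `e`, `e'` of one finite chain `γ` into chains
`α` and `β`, and the theorem amounts to embedding `α` and `β` into a common chain in which they
meet exactly in `γ`. Such a chain arises by placing, within each cut of `γ`, the new elements of
`α` before the new elements of `β`.
-/

open Function Set

universe u v w

variable {α : Type u} {β : Type v} {γ : Type w} {δ δ' R : Type*}

/-- `a` and `b` exhibit `δ` as a strong amalgam of `α` and `β` over `γ`: the square
`a ∘ e = b ∘ e'` commutes, the two images cover `δ`, and they meet only in the image of `γ`.
Injectivity is not part of the notion, so that it applies to plain functions and to bundled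
embeddings alike. -/
structure IsStrongAmalgam (e : γ → α) (e' : γ → β) (a : α → δ) (b : β → δ) : Prop where
  comm : ∀ k, a (e k) = b (e' k)
  inter_subset : range a ∩ range b ⊆ range (a ∘ e)
  union_eq : range a ∪ range b = univ

namespace IsStrongAmalgam

variable {e : γ → α} {e' : γ → β} {a : α → δ} {b : β → δ}

theorem comp_eq (h : IsStrongAmalgam e e' a b) : a ∘ e = b ∘ e' :=
  funext h.comm

theorem symm (h : IsStrongAmalgam e e' a b) : IsStrongAmalgam e' e b a where
  comm k := (h.comm k).symm
  inter_subset := by rw [inter_comm, ← h.comp_eq]; exact h.inter_subset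
  union_eq := by rw [union_comm, h.union_eq]

theorem equiv_comp (h : IsStrongAmalgam e e' a b) (σ : δ ≃ δ') :
    IsStrongAmalgam e e' (σ ∘ a) (σ ∘ b) where
  comm k := congrArg σ (h.comm k)
  inter_subset := by
    rw [comp_assoc, range_comp, range_comp, range_comp, ← image_inter σ.injective]
    exact image_mono h.inter_subset
  union_eq := by
    rw [range_comp, range_comp, ← image_union, h.union_eq, image_univ_of_surjective σ.surjective]

theorem inter_eq (h : IsStrongAmalgam e e' a b) : range a ∩ range b = range (a ∘ e) :=
  h.inter_subset.antisymm <|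
    subset_inter (range_comp_subset_range e a) (h.comp_eq ▸ range_comp_subset_range e' b)

theorem notMem_range_right (h : IsStrongAmalgam e e' a b) (ha : Injective a) {i : α}
    (hi : i ∉ range e) : a i ∉ range b := fun hb ↦ by
  obtain ⟨k, hk⟩ := h.inter_subset ⟨mem_range_self i, hb⟩
  exact hi ⟨k, ha hk⟩

theorem finite [Finite α] [Finite β] (h : IsStrongAmalgam e e' a b) : Finite δ :=
  finite_univ_iff.mp (h.union_eq ▸ (finite_range a).union (finite_range b))

theorem card_add_card [Finite α] [Finite β] (h : IsStrongAmalgam e e' a b) (ha : Injective a)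
    (hb : Injective b) (he : Injective e) :
    Nat.card δ + Nat.card γ = Nat.card α + Nat.card β := by
  have hcard := ncard_union_add_ncard_inter (range a) (range b)
  rwa [h.union_eq, h.inter_eq, ncard_univ, ncard_range_of_injective (ha.comp he),
    ncard_range_of_injective ha, ncard_range_of_injective hb] at hcard

theorem extend_extend_apply_left (h : IsStrongAmalgam e e' a b) (ha : Injective a)
    (hb : Injective b) (he : Injective e) (he' : Injective e') (x : γ → R) (ε η : R) (i : α) :
    extend a (extend e x fun _ ↦ η) (fun _ ↦ ε) (a i) =
      extend b (extend e' x fun _ ↦ ε) (fun _ ↦ η) (a i) := by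
  rw [ha.extend_apply]
  by_cases hi : i ∈ range e
  · obtain ⟨k, rfl⟩ := hi
    rw [h.comm, hb.extend_apply, he.extend_apply, he'.extend_apply]
  · rw [extend_apply' _ _ _ hi, extend_apply' _ _ _ (h.notMem_range_right ha hi)]

theorem extend_extend_comm (h : IsStrongAmalgam e e' a b) (ha : Injective a)
    (hb : Injective b) (he : Injective e) (he' : Injective e') (x : γ → R) (ε η : R) :
    extend a (extend e x fun _ ↦ η) (fun _ ↦ ε) =
      extend b (extend e' x fun _ ↦ ε) (fun _ ↦ η) := by
  funext t
  rcases h.union_eq.ge (mem_univ t) with ⟨i, rfl⟩ | ⟨j, rfl⟩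
  · exact h.extend_extend_apply_left ha hb he he' x ε η i
  · exact (h.symm.extend_extend_apply_left hb ha he' he x η ε j).symm

end IsStrongAmalgam

section Preorder

variable [Preorder α] [Preorder β] [Preorder γ]

/-- The cut of `γ` determined by `i : α`, for `γ` embedded in `α`. An element of `γ` belongs to its
own cut. -/
def lowerCut (e : γ ↪o α) (i : α) : LowerSet γ where
  carrier := {k | e k ≤ i}
  lower' _ _ hlk hk := (e.monotone hlk).trans hk

theorem lowerCut_mono (e : γ ↪o α) : Monotone (lowerCut e) :=
  fun _ _ hij _ hk ↦ le_trans hk hij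

theorem lowerCut_lt_lowerCut_apply (e : γ ↪o α) {i : α} {k : γ} (hik : i < e k) :
    lowerCut e i < lowerCut e (e k) :=
  (lowerCut_mono e hik.le).lt_of_not_ge fun hle ↦ hik.not_ge (hle (le_refl (e k)))

theorem lowerCut_apply (e : γ ↪o α) (k : γ) : lowerCut e (e k) = LowerSet.Iic k :=
  LowerSet.ext (Set.ext fun _ ↦ e.le_iff_le)

open Classical in
/-- The position of `i : α` in an amalgam over `γ`: first its cut in `γ`, then its rank among the
elements with that cut, which is `⊥` if `i` lies in `γ` (only one element of `γ` has a given cut,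
and it precedes all others) and `ι i` otherwise. Different choices of `ι` keep the new elements of
the two orders to be amalgamated apart. -/
noncomputable def amalgamKey (e : γ ↪o α) (ι : α → δ) (i : α) : LowerSet γ ×ₗ WithBot δ :=
  toLex (lowerCut e i, if i ∈ range e then ⊥ else ι i)

theorem amalgamKey_apply (e : γ ↪o α) (ι : α → δ) (k : γ) :
    amalgamKey e ι (e k) = toLex (LowerSet.Iic k, ⊥) := by
  rw [amalgamKey, lowerCut_apply, if_pos (mem_range_self k)]

theorem amalgamKey_of_notMem_range (e : γ ↪o α) (ι : α → δ) {i : α} (hi : i ∉ range e) :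
    amalgamKey e ι i = toLex (lowerCut e i, (ι i : WithBot δ)) := by
  rw [amalgamKey, if_neg hi]

theorem amalgamKey_strictMono [Preorder δ] (e : γ ↪o α) {ι : α → δ} (hι : StrictMono ι) :
    StrictMono (amalgamKey e ι) := by
  intro i j hij
  rw [Prod.Lex.lt_iff]
  by_cases hj : j ∈ range e
  · obtain ⟨k, rfl⟩ := hj
    exact Or.inl (lowerCut_lt_lowerCut_apply e hij)
  · refine (lowerCut_mono e hij.le).lt_or_eq.imp_right fun hcut ↦ ⟨hcut, ?_⟩
    rw [amalgamKey_of_notMem_range e ι hj]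
    by_cases hi : i ∈ range e
    · obtain ⟨k, rfl⟩ := hi
      rw [amalgamKey_apply]
      exact WithBot.bot_lt_coe _
    · rw [amalgamKey_of_notMem_range e ι hi]
      exact WithBot.coe_lt_coe.mpr (hι hij)

theorem mem_range_of_amalgamKey_eq (e : γ ↪o α) (e' : γ ↪o β) {ι : α → δ} {ι' : β → δ}
    (hι : ∀ i j, ι i ≠ ι' j) {i : α} {j : β} (hij : amalgamKey e ι i = amalgamKey e' ι' j) :
    i ∈ range e := by
  by_contra hi
  have hrank := congrArg (fun z ↦ (ofLex z).2) hij
  rw [amalgamKey_of_notMem_range e ι hi] at hrank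
  by_cases hj : j ∈ range e'
  · obtain ⟨k, rfl⟩ := hj
    rw [amalgamKey_apply] at hrank
    exact WithBot.coe_ne_bot hrank
  · rw [amalgamKey_of_notMem_range e' ι' hj] at hrank
    exact hι i j (WithBot.coe_injective hrank)

end Preorder

section LinearOrder

variable [LinearOrder α] [LinearOrder β] [LinearOrder γ]

theorem exists_isStrongAmalgam (e : γ ↪o α) (e' : γ ↪o β) :
    ∃ (L : Type (max u v w)) (_ : LinearOrder L) (a : α ↪o L) (b : β ↪o L),
      IsStrongAmalgam e e' a b := by
  let f := amalgamKey e (toLex ∘ Sum.inl : α → Lex (α ⊕ β))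
  let g := amalgamKey e' (toLex ∘ Sum.inr : β → Lex (α ⊕ β))
  let L := ↥(range f ∪ range g)
  let a : α ↪o L := .ofStrictMono (fun i ↦ ⟨f i, .inl (mem_range_self i)⟩) fun _ _ hij ↦
    amalgamKey_strictMono e Sum.Lex.inl_strictMono hij
  let b : β ↪o L := .ofStrictMono (fun j ↦ ⟨g j, .inr (mem_range_self j)⟩) fun _ _ hij ↦
    amalgamKey_strictMono e' Sum.Lex.inr_strictMono hij
  refine ⟨L, inferInstance, a, b, fun k ↦ Subtype.ext ?_, ?_, eq_univ_of_forall ?_⟩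
  · exact (amalgamKey_apply e _ k).trans (amalgamKey_apply e' _ k).symm
  · rintro _ ⟨⟨i, rfl⟩, j, hji⟩
    obtain ⟨k, rfl⟩ := mem_range_of_amalgamKey_eq e e' (fun _ _ ↦ Sum.inl_ne_inr)
      (congrArg Subtype.val hji.symm)
    exact mem_range_self k
  · rintro ⟨_, ⟨i, rfl⟩ | ⟨j, rfl⟩⟩
    · exact .inl (mem_range_self i)
    · exact .inr (mem_range_self j)

theorem exists_fin_isStrongAmalgam [Finite α] [Finite β] (e : γ ↪o α) (e' : γ ↪o β) {s : ℕ}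
    (hs : s + Nat.card γ = Nat.card α + Nat.card β) :
    ∃ (a : α ↪o Fin s) (b : β ↪o Fin s), IsStrongAmalgam e e' a b := by
  obtain ⟨L, _, a, b, h⟩ := exists_isStrongAmalgam e e'
  have := h.finite
  have := Fintype.ofFinite L
  have hL : Fintype.card L = s := by
    have hcard := h.card_add_card a.injective b.injective e.injective
    rw [Nat.card_eq_fintype_card] at hcard
    omega
  let σ : L ≃o Fin s := (Fintype.orderIsoFinOfCardEq L hL).symm
  exact ⟨a.trans σ.toOrderEmbedding, b.trans σ.toOrderEmbedding, h.equiv_comp σ.toEquiv⟩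

end LinearOrder

theorem deltaMap_eq_extend {m n : ℕ} {V : Finset (Fin n)} (h : Vᶜ.card = m) (ε : ℝ)
    (x : Fin m → ℝ) {a : Fin m ↪o Fin n} (ha : ∀ k, a k ∈ Vᶜ) :
    deltaMap V h ε x = extend a x fun _ ↦ ε := by
  obtain rfl : a = Vᶜ.orderEmbOfFin h := Finset.orderEmbOfFin_unique' h ha
  funext i
  by_cases hi : i ∈ V
  · have hrange : i ∉ range (Vᶜ.orderEmbOfFin h) := by simpa using hi
    rw [deltaMap, dif_pos hi, extend_apply' _ _ _ hrange]
  · obtain ⟨k, rfl⟩ : i ∈ range (Vᶜ.orderEmbOfFin h) := by simpa using hi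
    rw [deltaMap, dif_neg hi, (Vᶜ.orderEmbOfFin h).injective.extend_apply]
    exact congrArg x ((Vᶜ.orderIsoOfFin h).symm_apply_apply k)

theorem stmt13_general (p q : ℕ) (V : Finset (Fin p)) (W : Finset (Fin q))
    (hpq : p - V.card = q - W.card) :
    ∃ (V' W' : Finset (Fin (p + W.card))),
      V'.card = V.card ∧ W'.card = W.card ∧
      ∃ (hV : Vᶜ.card = p - V.card) (hW : Wᶜ.card = p - V.card)
        (hW' : W'ᶜ.card = p) (hV' : V'ᶜ.card = q),
        ∀ (ε η : ℝ) (x : Fin (p - V.card) → ℝ),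
          deltaMap W' hW' ε (deltaMap V hV η x)
            = deltaMap V' hV' η (deltaMap W hW ε x) := by
  have hVp : V.card ≤ p := card_finset_fin_le V
  have hWq : W.card ≤ q := card_finset_fin_le W
  have hV : Vᶜ.card = p - V.card := by simp [Finset.card_compl]
  have hW : Wᶜ.card = p - V.card := by simp [Finset.card_compl, hpq]
  let e := Vᶜ.orderEmbOfFin hV
  let e' := Wᶜ.orderEmbOfFin hW
  obtain ⟨a, b, h⟩ := exists_fin_isStrongAmalgam (s := p + W.card) e e'
    (by simp only [Nat.card_fin]; omega)
  have hb : (Finset.univ.map b.toEmbedding)ᶜ.card = V.card := by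
    rw [Finset.card_compl, Finset.card_map, Finset.card_fin, Fintype.card_fin]
    omega
  refine ⟨(Finset.univ.map b.toEmbedding)ᶜ, (Finset.univ.map a.toEmbedding)ᶜ, hb,
    by simp [Finset.card_compl], hV, hW, by simp, by simp, fun ε η x ↦ ?_⟩
  rw [deltaMap_eq_extend _ _ _ (a := a) (by simp), deltaMap_eq_extend _ _ _ (a := b) (by simp),
    deltaMap_eq_extend _ _ _ (Finset.orderEmbOfFin_mem _ hV),
    deltaMap_eq_extend _ _ _ (Finset.orderEmbOfFin_mem _ hW)]
  exact h.extend_extend_comm a.injective b.injective e.injective e'.injective x ε η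

/-- Let `p, q ≥ 0`, `V ⊆ {1,…,p}`, `W ⊆ {1,…,q}` with
`p − |V| = q − |W|`, and `s = p + |W| = q + |V|`. Then there exist
`V', W' ⊆ {1,…,s}` with `|V'| = |V|`, `|W'| = |W|` such that
`δ⁰_{W'} ∘ δ¹_V = δ¹_{V'} ∘ δ⁰_W` as maps `ℝ^{p−|V|} → ℝ^s`. -/
theorem stmt13 (p q : ℕ) (V : Finset (Fin p)) (W : Finset (Fin q))
    (hpq : p - V.card = q - W.card) :
    ∃ (V' W' : Finset (Fin (p + W.card))),
      V'.card = V.card ∧ W'.card = W.card ∧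
      ∃ (hV : Vᶜ.card = p - V.card) (hW : Wᶜ.card = p - V.card)
        (hW' : W'ᶜ.card = p) (hV' : V'ᶜ.card = q),
        ∀ x : Fin (p - V.card) → ℝ,
          deltaMap W' hW' 0 (deltaMap V hV 1 x)
            = deltaMap V' hV' 1 (deltaMap W hW 0 x) := by
  obtain ⟨V', W', hV'V, hW'W, hV, hW, hW', hV', hcomm⟩ := stmt13_general p q V W hpq
  exact ⟨V', W', hV'V, hW'W, hV, hW, hW', hV', hcomm 0 1⟩
end

section
/- Let X be a set and 𝒰 a finite family of nonempty subsets of X that is complete, i.e., closed under nonempty intersections (if U, V ∈ 𝒰 and U ∩ V ≠ ∅ then U ∩ V ∈ 𝒰). Let N𝒰 be the set of nonempty subfamilies J ⊆ 𝒰 with ⋂_{U∈J} U ≠ ∅, ordered by reverse inclusion, and order 𝒰 by inclusion. Then the maps Φ : N𝒰 → 𝒰, Φ(J) = ⋂_{U∈J} U, and Ψ : 𝒰 → N𝒰, Ψ(U) = {V ∈ 𝒰 : U ⊆ V}, are well defined and order preserving; moreover Φ(Ψ(U)) = U for every U ∈ 𝒰, and J ⊆ Ψ(Φ(J)) for every J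 ∈ N𝒰. -/
/-- `Φ(J) = ⋂_{U ∈ J} U`. -/
def nervePhi {X : Type*} (J : Finset (Set X)) : Set X := ⋂ U ∈ J, U

open Classical in
/-- `Ψ(U) = {V ∈ 𝒰 : U ⊆ V}`. -/
noncomputable def nervePsi {X : Type*} (𝒰 : Finset (Set X)) (U : Set X) :
    Finset (Set X) :=
  𝒰.filter (fun V => U ⊆ V)

theorem infClosed_insert_bot {α : Type*} [SemilatticeInf α] [OrderBot α] {s : Set α}
    (hs : ∀ a ∈ s, ∀ b ∈ s, a ⊓ b ≠ ⊥ → a ⊓ b ∈ s) : InfClosed (insert ⊥ s) := by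
  rintro a (rfl | ha) b (rfl | hb)
  · simp
  · simp
  · simp
  · exact or_iff_not_imp_left.2 (hs a ha b hb)

section

variable {X : Type*} {J J' 𝒰 : Finset (Set X)} {U U' V : Set X}

theorem subset_nervePhi_iff : V ⊆ nervePhi J ↔ ∀ U ∈ J, V ⊆ U :=
  Set.subset_iInter₂_iff

theorem nervePhi_subset_of_mem (hU : U ∈ J) : nervePhi J ⊆ U :=
  Set.biInter_subset_of_mem hU

theorem nervePhi_subset_nervePhi (h : J' ⊆ J) : nervePhi J ⊆ nervePhi J' :=
  Set.biInter_subset_biInter_left h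

/-- Adjoining `∅` turns closure under nonempty intersections into closure under all binary
intersections, hence under all nonempty finite ones. -/
theorem nervePhi_mem {𝒮 : Set (Set X)}
    (h𝒮 : ∀ U ∈ 𝒮, ∀ V ∈ 𝒮, (U ∩ V).Nonempty → U ∩ V ∈ 𝒮)
    (hJ : J.Nonempty) (hJ𝒮 : ↑J ⊆ 𝒮) (hΦ : (nervePhi J).Nonempty) : nervePhi J ∈ 𝒮 := by
  have hclosed : InfClosed (insert ∅ 𝒮) :=
    infClosed_insert_bot fun U hU V hV hUV => h𝒮 U hU V hV (Set.nonempty_iff_ne_empty.2 hUV)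
  have hmem : nervePhi J ∈ insert ∅ 𝒮 :=
    hclosed.biInf_mem_of_nonempty J.finite_toSet hJ fun _ hU => Or.inr (hJ𝒮 hU)
  exact Set.mem_of_mem_insert_of_ne hmem hΦ.ne_empty

theorem mem_nervePsi : V ∈ nervePsi 𝒰 U ↔ V ∈ 𝒰 ∧ U ⊆ V := by
  simp only [nervePsi, Finset.mem_filter]

theorem self_mem_nervePsi (hU : U ∈ 𝒰) : U ∈ nervePsi 𝒰 U :=
  mem_nervePsi.2 ⟨hU, subset_rfl⟩

theorem nervePsi_subset : nervePsi 𝒰 U ⊆ 𝒰 :=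
  fun _ hV => (mem_nervePsi.1 hV).1

/-- On subfamilies of `𝒰`, this is the antitone Galois connection between `Φ` and `Ψ`. -/
theorem subset_nervePsi_iff : J ⊆ nervePsi 𝒰 V ↔ J ⊆ 𝒰 ∧ V ⊆ nervePhi J := by
  simp only [Finset.subset_iff, mem_nervePsi, subset_nervePhi_iff, forall_and]

theorem subset_nervePhi_nervePsi : U ⊆ nervePhi (nervePsi 𝒰 U) :=
  (subset_nervePsi_iff.1 subset_rfl).2

theorem nervePsi_subset_nervePsi (h : U ⊆ U') : nervePsi 𝒰 U' ⊆ nervePsi 𝒰 U :=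
  subset_nervePsi_iff.2 ⟨nervePsi_subset, h.trans subset_nervePhi_nervePsi⟩

theorem subset_nervePsi_nervePhi (hJ : J ⊆ 𝒰) : J ⊆ nervePsi 𝒰 (nervePhi J) :=
  subset_nervePsi_iff.2 ⟨hJ, subset_rfl⟩

theorem nervePhi_nervePsi (hU : U ∈ 𝒰) : nervePhi (nervePsi 𝒰 U) = U :=
  (nervePhi_subset_of_mem (self_mem_nervePsi hU)).antisymm subset_nervePhi_nervePsi

end

/-- Let `𝒰` be a finite family of nonempty subsets of `X`, closed
under nonempty intersections.  Then `Φ(J) = ⋂_{U∈J} U` (on the nerve `N𝒰`,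
ordered by reverse inclusion) and `Ψ(U) = {V ∈ 𝒰 : U ⊆ V}` are well defined and
order preserving; moreover `Φ(Ψ(U)) = U` for every `U ∈ 𝒰` and `J ⊆ Ψ(Φ(J))`
for every `J ∈ N𝒰`. -/
theorem stmt14 {X : Type*} (𝒰 : Finset (Set X))
    (hne : ∀ U ∈ 𝒰, (U : Set X).Nonempty)
    (hcomp : ∀ U ∈ 𝒰, ∀ V ∈ 𝒰, (U ∩ V).Nonempty → U ∩ V ∈ 𝒰) :
    -- Φ is well defined: it sends the nerve into 𝒰
    (∀ J : Finset (Set X), J.Nonempty → J ⊆ 𝒰 → (nervePhi J).Nonempty →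
      nervePhi J ∈ 𝒰) ∧
    -- Φ is order preserving from (N𝒰, ⊇) to (𝒰, ⊆)
    (∀ J J' : Finset (Set X), J' ⊆ J → nervePhi J ⊆ nervePhi J') ∧
    -- Ψ is well defined: it sends 𝒰 into the nerve
    (∀ U ∈ 𝒰, (nervePsi 𝒰 U).Nonempty ∧ nervePsi 𝒰 U ⊆ 𝒰 ∧
      (nervePhi (nervePsi 𝒰 U)).Nonempty) ∧
    -- Ψ is order preserving from (𝒰, ⊆) to (N𝒰, ⊇)
    (∀ U U' : Set X, U ⊆ U' → nervePsi 𝒰 U' ⊆ nervePsi 𝒰 U) ∧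
    -- Φ ∘ Ψ is the identity
    (∀ U ∈ 𝒰, nervePhi (nervePsi 𝒰 U) = U) ∧
    -- J ⊆ Ψ(Φ(J)) for every J in the nerve
    (∀ J : Finset (Set X), J.Nonempty → J ⊆ 𝒰 → (nervePhi J).Nonempty →
      J ⊆ nervePsi 𝒰 (nervePhi J)) := by
  refine ⟨?Φ_mem, ?Φ_anti, ?Ψ_mem, ?Ψ_anti, ?ΦΨ, ?ΨΦ⟩
  case Φ_mem => exact fun J hJ hJ𝒰 hΦ => nervePhi_mem hcomp hJ hJ𝒰 hΦ
  case Φ_anti => exact fun J J' h => nervePhi_subset_nervePhi h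
  case Ψ_mem =>
    exact fun U hU =>
      ⟨⟨U, self_mem_nervePsi hU⟩, nervePsi_subset, (hne U hU).mono subset_nervePhi_nervePsi⟩
  case Ψ_anti => exact fun U U' h => nervePsi_subset_nervePsi h
  case ΦΨ => exact fun U hU => nervePhi_nervePsi hU
  case ΨΦ => exact fun J _ hJ𝒰 _ => subset_nervePsi_nervePhi hJ𝒰
end

section
/- Let <* = (x<, y<) be a regular double order on a finite set A with n elements, let h : A → {1,…,r} be the unique surjection inducing x<, and let b_p = |{a ∈ A : h(a) ≤ p}| for 0 ≤ p ≤ r (so b₀ = 0, b_r = n). Then there exists exactly one bijection i ↦ a_i from {1,…,n} to A such that: a_i x< a_j iff i ≤ b_p < j for some p, and a_i y< a_j iff b_{p−1} < i < j ≤ b_p for some p. (The monotonic numbering for <* exists and is unique.) -/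
variable {A : Type*}

open Finset

/-!
For a regular double order, `y` only relates elements of equal rank and totally orders each
rank level, so `x ∪ y` is the strict total order that lists the levels of `h` one after the
other. A bijection is a monotonic numbering exactly when it enumerates `A` increasingly for
`x ∪ y`, and a finite strict total order has exactly one increasing enumeration.
-/

theorem existsUnique_equiv_fin_rel_iff_lt [Fintype A] (s : A → A → Prop)
    [IsStrictTotalOrder A s] :
    ∃! e : Fin (Fintype.card A) ≃ A, ∀ i j, s (e i) (e j) ↔ i < j := by
  classical
  let _ : LinearOrder A := linearOrderOfSTO s
  let f : Fin (Fintype.card A) ≃o A := monoEquivOfFin A rfl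
  refine ⟨f.toEquiv, fun i j => f.lt_iff_lt, fun e he => ?_⟩
  have e_strictMono : StrictMono e := fun i j hij => (he i j).2 hij
  let g : Fin (Fintype.card A) ≃o A := ⟨e, e_strictMono.le_iff_le⟩
  exact congrArg RelIso.toEquiv (Subsingleton.elim g f)

theorem IsRegularDO.rank_eq_of_right {L : Type*} [LinearOrder L] {x y : A → A → Prop}
    {h : A → L} (hreg : IsRegularDO x y) (hi : ∀ a b, x a b ↔ h a < h b) {a b : A}
    (hab : y a b) : h a = h b := by
  obtain ⟨-, -, hxy⟩ := hreg
  exact le_antisymm (not_lt.1 fun hlt => (hxy b a ((hi b a).2 hlt)).2 hab)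
    (not_lt.1 fun hlt => (hxy a b ((hi a b).2 hlt)).1 hab)

theorem IsRegularDO.isStrictTotalOrder {x y : A → A → Prop} (hreg : IsRegularDO x y) :
    IsStrictTotalOrder A (fun a b => x a b ∨ y a b) := by
  obtain ⟨l, h, -, hi⟩ := hreg.2.1
  have rank_eq {a b : A} (hab : y a b) : h a = h b := hreg.rank_eq_of_right hi hab
  obtain ⟨⟨⟨x_irrefl, x_trans⟩, ⟨y_irrefl, y_trans⟩, total⟩, -, -⟩ := hreg
  exact
    { irrefl := fun a ha => ha.elim (x_irrefl a) (y_irrefl a)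
      trans := by
        rintro a b c (hab | hab) (hbc | hbc)
        · exact .inl (x_trans a b c hab hbc)
        · exact .inl ((hi a c).2 (rank_eq hbc ▸ (hi a b).1 hab))
        · exact .inl ((hi a c).2 (rank_eq hab ▸ (hi b c).1 hbc))
        · exact .inr (y_trans a b c hab hbc)
      trichotomous := fun a b hab hba => by
        by_contra hne
        have := total a b hne
        tauto }

section Enumeration

variable {L : Type*} [LinearOrder L] [Fintype A] {n : ℕ}

theorem lt_card_filter_iff_of_antitone (e : Fin n ≃ A) {P : A → Prop} [DecidablePred P]
    (hP : Antitone (P ∘ e)) (i : Fin n) : (i : ℕ) < #{a | P a} ↔ P (e i) := by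
  have card_eq : #{j | P (e j)} = #{a | P a} := card_equiv e (by simp)
  rw [← card_eq]
  exact Fin.lt_card_filter_univ_iff_apply_of_imp (P ∘ e) fun j k hjk => hP hjk

/-- A monotonic numbering `e` for `(x, y)`, where `x` is induced by the rank function `h`.
The positions are 0-based and the ranks lie in an arbitrary linear order: with ranks `1, …, r`,
the counts `#{a | h a < p}` and `#{a | h a ≤ p}` are the block boundaries `b_{p-1}` and `b_p`. -/
def IsMonotonicNumbering (x y : A → A → Prop) (h : A → L) (e : Fin n ≃ A) : Prop :=
  (∀ i j, x (e i) (e j) ↔ ∃ p, (i : ℕ) < #{a | h a < p} ∧ #{a | h a < p} ≤ (j : ℕ)) ∧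
  (∀ i j, y (e i) (e j) ↔
    ∃ p, #{a | h a < p} ≤ (i : ℕ) ∧ (i : ℕ) < (j : ℕ) ∧ (j : ℕ) < #{a | h a ≤ p})

variable {x y : A → A → Prop} {h : A → L} {e : Fin n ≃ A}

theorem lt_card_rank_lt_iff (he : Monotone (h ∘ e)) {p : L} {i : Fin n} :
    (i : ℕ) < #{a | h a < p} ↔ h (e i) < p :=
  lt_card_filter_iff_of_antitone e (fun _ _ hle => (he hle).trans_lt) i

theorem lt_card_rank_le_iff (he : Monotone (h ∘ e)) {p : L} {i : Fin n} :
    (i : ℕ) < #{a | h a ≤ p} ↔ h (e i) ≤ p :=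
  lt_card_filter_iff_of_antitone e (fun _ _ hle => (he hle).trans) i

theorem card_rank_lt_le_iff (he : Monotone (h ∘ e)) {p : L} {i : Fin n} :
    #{a | h a < p} ≤ (i : ℕ) ↔ p ≤ h (e i) := by
  rw [← not_lt, lt_card_rank_lt_iff he, not_lt]

theorem exists_boundary_between_iff (he : Monotone (h ∘ e)) (i j : Fin n) :
    (∃ p, (i : ℕ) < #{a | h a < p} ∧ #{a | h a < p} ≤ (j : ℕ)) ↔ h (e i) < h (e j) := by
  simp only [lt_card_rank_lt_iff he, card_rank_lt_le_iff he]
  exact ⟨fun ⟨_, hip, hpj⟩ => hip.trans_le hpj, fun hij => ⟨h (e j), hij, le_rfl⟩⟩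

theorem exists_common_block_iff (he : Monotone (h ∘ e)) (i j : Fin n) :
    (∃ p, #{a | h a < p} ≤ (i : ℕ) ∧ (i : ℕ) < (j : ℕ) ∧ (j : ℕ) < #{a | h a ≤ p}) ↔
      i < j ∧ h (e i) = h (e j) := by
  simp only [card_rank_lt_le_iff he, lt_card_rank_le_iff he, Fin.val_fin_lt]
  constructor
  · rintro ⟨p, hpi, hij, hjp⟩
    exact ⟨hij, (he hij.le).antisymm (hjp.trans hpi)⟩
  · rintro ⟨hij, rank_eq⟩
    exact ⟨h (e i), le_rfl, hij, rank_eq.ge⟩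

theorem IsMonotonicNumbering.lt_of_rel (he : IsMonotonicNumbering x y h e) {i j : Fin n}
    (hij : x (e i) (e j) ∨ y (e i) (e j)) : i < j := by
  rcases hij with hij | hij
  · obtain ⟨p, hip, hpj⟩ := (he.1 i j).1 hij
    exact hip.trans_le hpj
  · obtain ⟨p, -, hlt, -⟩ := (he.2 i j).1 hij
    exact hlt

theorem IsRegularDO.isMonotonicNumbering_of_rel_iff_lt (hreg : IsRegularDO x y)
    (hi : ∀ a b, x a b ↔ h a < h b)
    (he : ∀ i j, x (e i) (e j) ∨ y (e i) (e j) ↔ i < j) : IsMonotonicNumbering x y h e := by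
  have rank_mono : Monotone (h ∘ e) := fun i j hij =>
    not_lt.1 fun hlt => hij.not_gt ((he j i).1 (.inl ((hi _ _).2 hlt)))
  refine ⟨fun i j => (hi _ _).trans (exists_boundary_between_iff rank_mono i j).symm,
    fun i j => .trans ?_ (exists_common_block_iff rank_mono i j).symm⟩
  constructor
  · intro hij
    exact ⟨(he i j).1 (.inr hij), hreg.rank_eq_of_right hi hij⟩
  · rintro ⟨hlt, rank_eq⟩
    exact ((he i j).2 hlt).resolve_left fun hx => ((hi _ _).1 hx).ne rank_eq

theorem IsRegularDO.isMonotonicNumbering_iff_rel_iff_lt (hreg : IsRegularDO x y)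
    (hi : ∀ a b, x a b ↔ h a < h b) :
    IsMonotonicNumbering x y h e ↔ ∀ i j, x (e i) (e j) ∨ y (e i) (e j) ↔ i < j := by
  refine ⟨fun he i j => ?_, hreg.isMonotonicNumbering_of_rel_iff_lt hi⟩
  have := hreg.isStrictTotalOrder
  let position : (fun a b => x a b ∨ y a b) ↪r ((· < ·) : Fin n → Fin n → Prop) :=
    .ofMonotone e.symm fun a b hab => he.lt_of_rel (by simpa using hab)
  simpa [position] using (position.map_rel_iff (a := e i) (b := e j)).symm

end Enumeration

theorem stmt15_general {L : Type*} [LinearOrder L] [Fintype A] (x y : A → A → Prop)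
    (hreg : IsRegularDO x y) (h : A → L) (hi : ∀ a b, x a b ↔ h a < h b) :
    ∃! e : Fin (Fintype.card A) ≃ A, IsMonotonicNumbering x y h e := by
  have := hreg.isStrictTotalOrder
  simpa only [hreg.isMonotonicNumbering_iff_rel_iff_lt hi] using
    existsUnique_equiv_fin_rel_iff_lt (fun a b => x a b ∨ y a b)

/-- Let `(x,y)` be a regular double order on a finite set `A` with
`n` elements, `h : A → Fin r` the (unique) surjection inducing `x`, and
`b p = |{a : h(a) < p}|` (so `b 0 = 0`, `b r = n`).  Then there is exactly one
bijection `e : Fin n ≃ A` (the monotonic numbering) such that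
`x (e i) (e j) ↔ ∃ p, i < b p ≤ j` and
`y (e i) (e j) ↔ ∃ p, b p ≤ i < j < b (p+1)` (here positions are 0-based). -/
theorem stmt15 {A : Type*} [Fintype A] (x y : A → A → Prop)
    (hreg : IsRegularDO x y)
    (r : ℕ) (h : A → Fin r) (hs : Function.Surjective h)
    (hi : ∀ a b, x a b ↔ h a < h b) :
    ∃! e : Fin (Fintype.card A) ≃ A,
      (∀ i j, x (e i) (e j) ↔ ∃ p : ℕ,
        (i : ℕ) < (Finset.univ.filter (fun a : A => (h a : ℕ) < p)).card ∧
        (Finset.univ.filter (fun a : A => (h a : ℕ) < p)).card ≤ (j : ℕ)) ∧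
      (∀ i j, y (e i) (e j) ↔ ∃ p : ℕ,
        (Finset.univ.filter (fun a : A => (h a : ℕ) < p)).card ≤ (i : ℕ) ∧
        (i : ℕ) < (j : ℕ) ∧
        (j : ℕ) < (Finset.univ.filter (fun a : A => (h a : ℕ) < p + 1)).card) := by
  simpa only [IsMonotonicNumbering, Order.lt_add_one_iff] using
    stmt15_general x y hreg (fun a => (h a : ℕ)) hi
end

section
/- Let <* = (x<, y<) and <*' = (x<', y<') be regular double orders on a finite set A with n elements such that x<' ⊆ x< and y< ⊆ y<' (i.e., <* ⊒ <*'). Write F(<*) = {b₁ < … < b_{r−1}}, F(<*') = {b'₁ < … < b'_{r'−1}}, let (a_i) and (a'_i) be the monotonic numberings of <* and <*' respectively, and let φ be the permutation of {1,…,n} determined by a'_{φ(i)} = a_i. Then F(<*') ⊆ F(<*), and φ satisfies: (x) φ({b'_{p−1}+1, …, b'_p}) = {b'_{p−1}+1, …, b'_p} for every p ∈ {1,…,r'} (with b'₀ = 0, b'_{r'} = n); and (y) φ(b_{p−1}+1) < φ(b_{p−1}+2) < … < φ(b_p) for every p ∈ {1,…,r} (with b₀ = 0, b_r = n). -/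
variable {A : Type*}

/-!
Let `h` and `h'` be the height functions inducing `x` and `x'`. Since `x' ⊆ x`, both monotonic
numberings enumerate `A` by nondecreasing `h'`, so in either of them the `b' p` elements of height
`h' < p` come first; hence `φ` preserves the blocks of `<*'`. Moreover every nonempty proper
sublevel set of `h'` is a sublevel set of `h`, cut at the smallest value of `h` outside it, and so
`F(<*') ⊆ F(<*)`. Finally, elements of one block of `<*` are compared by `y ⊆ y'`, and the numbering
of `<*'` respects `y'`.
-/

section Sublevel

open Finset

variable {α β : Type*}

/-- The number of elements of `A` at which `f` is less than `t`. When `f` is the surjection inducing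
the first order of a regular double order, numbered from `0`, this is the block boundary `b_t`. -/
def sublevelCard [Fintype A] [LT α] [DecidableLT α] (f : A → α) (t : α) : ℕ :=
  #{a | f a < t}

theorem mem_iff_val_lt_card_of_isLowerSet {n : ℕ} {s : Finset (Fin n)}
    (hs : IsLowerSet (s : Set (Fin n))) (i : Fin n) : i ∈ s ↔ (i : ℕ) < #s := by
  constructor
  · intro hi
    have hsub : Iic i ⊆ s := fun j hj => hs (mem_Iic.1 hj) hi
    simpa only [Fin.card_Iic, Nat.succ_le_iff] using card_le_card hsub
  · contrapose!
    intro hi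
    have hsub : s ⊆ Iio i := fun j hj => mem_Iio.2 (not_le.1 fun hij => hi (hs hij hj))
    simpa only [Fin.card_Iio] using card_le_card hsub

theorem val_lt_sublevelCard_iff [Fintype A] [Preorder α] [DecidableLT α] {n : ℕ} {f : A → α}
    {e : Fin n ≃ A} (hf : Monotone (f ∘ e)) (t : α) (i : Fin n) :
    (i : ℕ) < sublevelCard f t ↔ f (e i) < t := by
  have hcard : #{j | f (e j) < t} = sublevelCard f t := card_equiv e (by simp)
  have hlower : IsLowerSet (({j | f (e j) < t} : Finset (Fin n)) : Set (Fin n)) := by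
    intro j k hkj hj
    simp only [mem_coe, mem_filter_univ] at hj ⊢
    exact (hf hkj).trans_lt hj
  rw [← hcard, ← mem_iff_val_lt_card_of_isLowerSet hlower, mem_filter_univ]

theorem val_trans_symm_lt_sublevelCard_iff [Fintype A] [Preorder α] [DecidableLT α] {n : ℕ}
    {f : A → α} {e e' : Fin n ≃ A} (hf : Monotone (f ∘ e)) (hf' : Monotone (f ∘ e'))
    (t : α) (i : Fin n) :
    ((e.trans e'.symm) i : ℕ) < sublevelCard f t ↔ (i : ℕ) < sublevelCard f t := by
  rw [val_lt_sublevelCard_iff hf', val_lt_sublevelCard_iff hf, Equiv.trans_apply,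
    Equiv.apply_symm_apply]

theorem exists_forall_lt_iff_lt [Preorder α] [WellFoundedLT α] [LinearOrder β]
    {f : A → α} {g : A → β} (hgf : ∀ a c, g a < g c → f a < f c) {t : β} (ht : ∃ a, t ≤ g a) :
    ∃ c, ∀ a, f a < f c ↔ g a < t := by
  let c := Function.argminOn f {a | t ≤ g a} ht
  have hc : t ≤ g c := Function.argminOn_mem f {a | t ≤ g a} ht
  refine ⟨c, fun a => ⟨fun hac => ?_, fun hat => hgf a c (hat.trans_le hc)⟩⟩
  exact not_le.1 fun hta => Function.not_lt_argminOn f {a | t ≤ g a} hta hac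

theorem image_sublevelCard_subset [Fintype A] {r r' : ℕ} {h : A → Fin r} {h' : A → Fin r'}
    (hs' : Function.Surjective h') (hlt : ∀ a c, h' a < h' c → h a < h c) :
    (Ioo 0 r').image (sublevelCard fun a => (h' a : ℕ)) ⊆
      (Ioo 0 r).image (sublevelCard fun a => (h a : ℕ)) := by
  refine image_subset_iff.2 fun p hp => ?_
  obtain ⟨hp0, hpr⟩ := mem_Ioo.1 hp
  obtain ⟨a, ha⟩ := hs' ⟨0, hp0.trans hpr⟩
  obtain ⟨d, hd⟩ := hs' ⟨p, hpr⟩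
  obtain ⟨c, hc⟩ := exists_forall_lt_iff_lt (g := fun a => (h' a : ℕ)) hlt ⟨d, by rw [hd]⟩
  have hac : h a < h c := (hc a).2 (by rwa [ha])
  refine mem_image.2 ⟨h c, mem_Ioo.2 ⟨Nat.zero_lt_of_lt hac, (h c).isLt⟩, ?_⟩
  exact congrArg card (filter_congr fun a _ => hc a)

end Sublevel

/-- The bijection `e` is the monotonic numbering of the double order `(x, y)` with block boundaries
`b`. Positions are numbered from `0`, so the `p`-th block is `{i | b p ≤ i < b (p + 1)}`. -/
structure IsMonotonicNumbering_s17 (x y : A → A → Prop) (b : ℕ → ℕ) {n : ℕ} (e : Fin n ≃ A) :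
    Prop where
  x_iff : ∀ i j, x (e i) (e j) ↔ ∃ p, (i : ℕ) < b p ∧ b p ≤ (j : ℕ)
  y_iff : ∀ i j, y (e i) (e j) ↔ ∃ p, b p ≤ (i : ℕ) ∧ (i : ℕ) < (j : ℕ) ∧ (j : ℕ) < b (p + 1)

namespace IsMonotonicNumbering_s17

variable {x y x' y' : A → A → Prop} {b b' : ℕ → ℕ} {n : ℕ} {e e' : Fin n ≃ A}

theorem lt_of_x (he : IsMonotonicNumbering_s17 x y b e) {i j : Fin n} (hij : x (e i) (e j)) :
    i < j := by
  obtain ⟨p, hip, hpj⟩ := (he.x_iff i j).1 hij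
  exact Fin.lt_def.2 (hip.trans_le hpj)

theorem lt_of_y (he : IsMonotonicNumbering_s17 x y b e) {i j : Fin n} (hij : y (e i) (e j)) :
    i < j := by
  obtain ⟨p, -, hlt, -⟩ := (he.y_iff i j).1 hij
  exact Fin.lt_def.2 hlt

theorem monotone_comp (he : IsMonotonicNumbering_s17 x y b e) {α : Type*} [LinearOrder α] {f : A → α}
    (hf : ∀ a c, f a < f c → x a c) : Monotone (f ∘ e) :=
  fun _ _ hij => not_lt.1 fun hlt => (he.lt_of_x (hf _ _ hlt)).not_ge hij

theorem trans_symm_lt_trans_symm (he : IsMonotonicNumbering_s17 x y b e)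
    (he' : IsMonotonicNumbering_s17 x' y' b' e') (hy : ∀ a c, y a c → y' a c) {p : ℕ} {i j : Fin n}
    (hi : b p ≤ (i : ℕ)) (hij : (i : ℕ) < (j : ℕ)) (hj : (j : ℕ) < b (p + 1)) :
    (e.trans e'.symm) i < (e.trans e'.symm) j := by
  have hy' : y' (e i) (e j) := hy _ _ ((he.y_iff i j).2 ⟨p, hi, hij, hj⟩)
  exact he'.lt_of_y (by simpa only [Equiv.trans_apply, Equiv.apply_symm_apply] using hy')

end IsMonotonicNumbering_s17

/-- Let `<* = (x,y)` and `<*' = (x',y')` be regular double orders on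
a finite set `A` with `n` elements, with `x' ⊆ x` and `y ⊆ y'` (i.e. `<* ⊒ <*'`).
Let `h, h'` be the unique surjections inducing `x, x'`, with associated functions
`b, b'` (so `F(<*) = {b p : 0 < p < r}` etc.), let `e, e'` be the monotonic
numberings of `<*, <*'`, and let `φ = e'⁻¹ ∘ e` be the permutation of positions
determined by `a'_{φ(i)} = a_i`.  Then `F(<*') ⊆ F(<*)`, `φ` preserves each block
`{i : b' p ≤ i < b' (p+1)}` of `F(<*')` (condition (x)), and `φ` is strictly
increasing on each block `{i : b p ≤ i < b (p+1)}` of `F(<*)` (condition (y)).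
(Positions are 0-based.) -/
theorem stmt17 {A : Type*} [Fintype A] (x y x' y' : A → A → Prop)
    (hreg : IsRegularDO x y) (hreg' : IsRegularDO x' y')
    (hx : ∀ a b, x' a b → x a b) (hy : ∀ a b, y a b → y' a b)
    (r : ℕ) (h : A → Fin r) (hs : Function.Surjective h)
    (hi : ∀ a b, x a b ↔ h a < h b)
    (r' : ℕ) (h' : A → Fin r') (hs' : Function.Surjective h')
    (hi' : ∀ a b, x' a b ↔ h' a < h' b)
    (b b' : ℕ → ℕ)
    (hb : ∀ p, b p = (Finset.univ.filter (fun a : A => (h a : ℕ) < p)).card)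
    (hb' : ∀ p, b' p = (Finset.univ.filter (fun a : A => (h' a : ℕ) < p)).card)
    (e e' : Fin (Fintype.card A) ≃ A)
    (he1 : ∀ i j, x (e i) (e j) ↔ ∃ p : ℕ, (i : ℕ) < b p ∧ b p ≤ (j : ℕ))
    (he2 : ∀ i j, y (e i) (e j) ↔
      ∃ p : ℕ, b p ≤ (i : ℕ) ∧ (i : ℕ) < (j : ℕ) ∧ (j : ℕ) < b (p + 1))
    (he1' : ∀ i j, x' (e' i) (e' j) ↔ ∃ p : ℕ, (i : ℕ) < b' p ∧ b' p ≤ (j : ℕ))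
    (he2' : ∀ i j, y' (e' i) (e' j) ↔
      ∃ p : ℕ, b' p ≤ (i : ℕ) ∧ (i : ℕ) < (j : ℕ) ∧ (j : ℕ) < b' (p + 1)) :
    ((Finset.Ioo 0 r').image b' ⊆ (Finset.Ioo 0 r).image b) ∧
    (∀ (p : ℕ) (i : Fin (Fintype.card A)),
      b' p ≤ (i : ℕ) → (i : ℕ) < b' (p + 1) →
      b' p ≤ ((e.trans e'.symm) i : ℕ) ∧ ((e.trans e'.symm) i : ℕ) < b' (p + 1)) ∧
    (∀ (p : ℕ) (i j : Fin (Fintype.card A)),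
      b p ≤ (i : ℕ) → (i : ℕ) < (j : ℕ) → (j : ℕ) < b (p + 1) →
      ((e.trans e'.symm) i : ℕ) < ((e.trans e'.symm) j : ℕ)) := by
  obtain rfl : b = sublevelCard fun a => (h a : ℕ) := funext hb
  obtain rfl : b' = sublevelCard fun a => (h' a : ℕ) := funext hb'
  have he : IsMonotonicNumbering_s17 x y _ e := ⟨he1, he2⟩
  have he' : IsMonotonicNumbering_s17 x' y' _ e' := ⟨he1', he2'⟩
  have hx' : ∀ a c, h' a < h' c → x a c := fun a c hac => hx a c ((hi' a c).2 hac)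
  have hmono : Monotone ((fun a => (h' a : ℕ)) ∘ e) := he.monotone_comp hx'
  have hmono' : Monotone ((fun a => (h' a : ℕ)) ∘ e') := he'.monotone_comp fun a c => (hi' a c).2
  have hφ := val_trans_symm_lt_sublevelCard_iff hmono hmono'
  refine ⟨image_sublevelCard_subset hs' fun a c hac => (hi a c).1 (hx' a c hac), ?_, ?_⟩
  · exact fun p i hpi hip => ⟨not_lt.1 fun hlt => hpi.not_gt ((hφ p i).1 hlt), (hφ (p + 1) i).2 hip⟩
  · exact fun p i j => he.trans_symm_lt_trans_symm he' hy
end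

section
/- For every n ≥ 1 and every β ∈ P(Iⁿ)₀¹, there exists exactly one sorted path β' ∈ P(Iⁿ)₀¹ with β ∼ β'. That is, every ∼-equivalence class of monotone paths from (0,…,0) to (1,…,1) in the n-cube contains a unique sorted representative. -/
open scoped unitInterval

/-- A (coordinatewise) monotone path in the `n`-cube from `(0,…,0)` to `(1,…,1)`:
each coordinate `βᵢ : [0,1] → [0,1]` is continuous and nondecreasing, with
`βᵢ 0 = 0` and `βᵢ 1 = 1`. -/
def IsDiPath {n : ℕ} (β : Fin n → I → I) : Prop :=
  (∀ i, Continuous (β i)) ∧ (∀ i, Monotone (β i)) ∧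
  (∀ i, β i 0 = 0) ∧ (∀ i, β i 1 = 1)

/-- The support of the `i`-th coordinate: `{t : 0 < βᵢ t < 1}`. -/
def pathSupp {n : ℕ} (β : Fin n → I → I) (i : Fin n) : Set I :=
  {t | 0 < β i t ∧ β i t < 1}

/-- One generating step of the equivalence relation `∼`: swapping two adjacent
coordinates with disjoint supports. -/
def SwapStep {n : ℕ} (β β' : Fin n → I → I) : Prop :=
  ∃ (i : ℕ) (hi : i + 1 < n),
    pathSupp β ⟨i, Nat.lt_of_succ_lt hi⟩ ∩ pathSupp β ⟨i + 1, hi⟩ = ∅ ∧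
    β' = β ∘ Equiv.swap ⟨i, Nat.lt_of_succ_lt hi⟩ ⟨i + 1, hi⟩

/-- A path is sorted if whenever two adjacent coordinates have disjoint supports,
the support of the first precedes the support of the second: there is
`t ∈ (0,1)` with `βᵢ t = 1` and `βᵢ₊₁ t = 0`. -/
def IsSorted {n : ℕ} (β : Fin n → I → I) : Prop :=
  ∀ (i : ℕ) (hi : i + 1 < n),
    pathSupp β ⟨i, Nat.lt_of_succ_lt hi⟩ ∩ pathSupp β ⟨i + 1, hi⟩ = ∅ →
    ∃ t : I, 0 < t ∧ t < 1 ∧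
      β ⟨i, Nat.lt_of_succ_lt hi⟩ t = 1 ∧ β ⟨i + 1, hi⟩ t = 0

/-!
Coordinates with disjoint supports are comparable for the interval order "`f` reaches `1` before `g`
leaves `0`": the pair `(f, g)` runs along the boundary of the square from `(0, 0)` to `(1, 1)`,
so it passes through `(1, 0)` or `(0, 1)`. Hence a path is a word in a strictly ordered alphabet,
`∼` lets adjacent comparable letters commute, and a word is sorted when it has no adjacent descent.

*Existence.* Exchanging an adjacent descent makes a word lexicographically smaller, and a word has
finitely many rearrangements.

*Uniqueness.* Equivalent words `w` and `w ∘ ρ` differ by a permutation that only inverts comparable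
letters. Let `m` be the first position moved by `ρ`. In `w ∘ ρ`, all letters from position `m` up to
the letter `w m` are comparable with `w m`; as there is no adjacent descent, going backwards from
`w m` they all precede it, in particular `w (ρ m)` does. By symmetry `w m` precedes `w (ρ m)`, which
is absurd.
-/

section Words

open Relation

variable {ι α : Type*} [LinearOrder ι] {D r : α → α → Prop} {w w' : ι → α} {ρ τ : Equiv.Perm ι}

/-- Exchanging two adjacent letters of the word `w` that commute, i.e. are related by `D`:
the generating step of a partially commutative monoid, of which `SwapStep` is an instance. -/
def AdjacentSwap (D : α → α → Prop) (w w' : ι → α) : Prop :=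
  ∃ i j, i ⋖ j ∧ D (w i) (w j) ∧ w' = w ∘ Equiv.swap i j

/-- Every inversion of `ρ`, a pair of letters of `w` whose order is reversed in `w ∘ ρ`, lies
in `D`. Words equivalent under `AdjacentSwap D` differ by such a permutation. -/
def InversionsIn (D : α → α → Prop) (w : ι → α) (ρ : Equiv.Perm ι) : Prop :=
  ∀ i j, i < j → ρ j < ρ i → D (w (ρ i)) (w (ρ j))

/-- No two adjacent letters of `w` are in the wrong order for `r`; the combinatorial form of
`IsSorted`. -/
def HasNoDescent (r : α → α → Prop) (w : ι → α) : Prop :=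
  ∀ i j, i ⋖ j → ¬ r (w j) (w i)

theorem inversionsIn_one : InversionsIn D w 1 := fun _ _ hij hji => (lt_asymm hij hji).elim

theorem InversionsIn.mono (hρ : InversionsIn D w ρ) (h : ∀ i j, D (w i) (w j) → r (w i) (w j)) :
    InversionsIn r w ρ :=
  fun i j hij hji => h _ _ (hρ i j hij hji)

theorem InversionsIn.mul (hρ : InversionsIn D w ρ) (hτ : InversionsIn D (w ∘ ρ) τ) :
    InversionsIn D w (ρ * τ) := by
  intro i j hij hji
  rcases lt_or_gt_of_ne (τ.injective.ne hij.ne) with hlt | hgt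
  · exact hρ _ _ hlt hji
  · exact hτ i j hij hgt

theorem InversionsIn.inv [Std.Symm D] (hρ : InversionsIn D w ρ) :
    InversionsIn D (w ∘ ρ) ρ⁻¹ := by
  intro i j hij hji
  simpa using symm (hρ _ _ hji (by simpa using hij))

theorem eq_and_eq_of_swap_lt_swap {i j a b : ι} (hij : i ⋖ j) (hab : a < b)
    (hba : Equiv.swap i j b < Equiv.swap i j a) : a = i ∧ b = j := by
  have hgap : ∀ c, i < c → ¬ c < j := fun _ hic => hij.2 hic
  have hlt := hij.lt
  grind

theorem inversionsIn_swap [Std.Symm D] {i j : ι} (hij : i ⋖ j) (hD : D (w i) (w j)) :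
    InversionsIn D w (Equiv.swap i j) := by
  intro a b hab hba
  obtain ⟨rfl, rfl⟩ := eq_and_eq_of_swap_lt_swap hij hab hba
  simpa using symm hD

theorem exists_inversionsIn_of_eqvGen_adjacentSwap [Std.Symm D]
    (h : EqvGen (AdjacentSwap D) w w') : ∃ ρ : Equiv.Perm ι, w' = w ∘ ρ ∧ InversionsIn D w ρ := by
  induction h with
  | rel w _ h =>
    obtain ⟨i, j, hij, hD, rfl⟩ := h
    exact ⟨_, rfl, inversionsIn_swap hij hD⟩
  | refl w => exact ⟨1, rfl, inversionsIn_one⟩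
  | symm w _ _ ih =>
    obtain ⟨ρ, rfl, hρ⟩ := ih
    exact ⟨ρ⁻¹, by ext; simp, hρ.inv⟩
  | trans w _ _ _ _ ih₁ ih₂ =>
    obtain ⟨ρ, rfl, hρ⟩ := ih₁
    obtain ⟨τ, rfl, hτ⟩ := ih₂
    exact ⟨ρ * τ, rfl, hρ.mul hτ⟩

variable [Finite ι]

theorem HasNoDescent.rel_of_forall_symmGen [IsTrans α r] (hw : HasNoDescent r w) {i j : ι}
    (hij : i < j) (h : ∀ k, i ≤ k → k < j → SymmGen r (w k) (w j)) : r (w i) (w j) := by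
  induction i using WellFoundedGT.induction with
  | _ i ih =>
    refine (h i le_rfl hij).resolve_right fun hji => ?_
    obtain ⟨k, hik, hkj⟩ := exists_covBy_le_of_lt hij
    rcases hkj.eq_or_lt with rfl | hkj
    · exact hw i k hik hji
    · have hkj' := ih k hik.lt hkj fun l hkl => h l (hik.le.trans hkl)
      exact hw i k hik (_root_.trans hkj' hji)

theorem HasNoDescent.rel_apply_of_first_moved [IsTrans α r] (hw : HasNoDescent r (w ∘ ρ))
    (hρ : InversionsIn (SymmGen r) w ρ) {m : ι} (hfix : ∀ k < m, ρ k = k) (hm : ρ m ≠ m) :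
    r (w (ρ m)) (w m) := by
  obtain ⟨j, hj⟩ := ρ.surjective m
  have hmj : m < j := by
    refine lt_of_le_of_ne (not_lt.1 fun hjm => hjm.ne ?_) fun h => hm (by rw [h, hj, h])
    rw [← hfix j hjm, hj]
  have lt_apply : ∀ k, m ≤ k → k < j → m < ρ k := by
    intro k hmk hkj
    refine lt_of_le_of_ne (not_lt.1 fun hkm => ?_) fun h => hkj.ne (ρ.injective (hj.trans h).symm)
    exact (hkm.trans_le hmk).ne (ρ.injective (hfix _ hkm))
  have hr : r (w (ρ m)) (w (ρ j)) := hw.rel_of_forall_symmGen hmj fun k hmk hkj =>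
    hρ k j hkj (hj ▸ lt_apply k hmk hkj)
  rwa [hj] at hr

theorem HasNoDescent.perm_eq_one [IsStrictOrder α r] (hw : HasNoDescent r w)
    (hwρ : HasNoDescent r (w ∘ ρ)) (hρ : InversionsIn (SymmGen r) w ρ) : ρ = 1 := by
  ext m
  induction m using WellFoundedLT.induction with
  | _ m hfix =>
    by_contra hm
    have hfix_inv : ∀ k < m, ρ⁻¹ k = k := fun k hk => Equiv.Perm.inv_eq_iff_eq.2 (hfix k hk).symm
    have hm_inv : ρ⁻¹ m ≠ m := fun h => hm (Equiv.Perm.inv_eq_iff_eq.1 h).symm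
    have hw_inv : HasNoDescent r ((w ∘ ρ) ∘ ⇑ρ⁻¹) := by
      rwa [show (w ∘ ρ) ∘ ⇑ρ⁻¹ = w by ext; simp]
    have apply_rel : r (w (ρ m)) (w m) := hwρ.rel_apply_of_first_moved hρ hfix hm
    have rel_apply : r (w m) (w (ρ m)) := by
      simpa using hw_inv.rel_apply_of_first_moved hρ.inv hfix_inv hm_inv
    exact asymm apply_rel rel_apply

theorem exists_eqvGen_adjacentSwap_hasNoDescent [IsStrictOrder α r] (w : ι → α)
    (h : ∀ i j, r (w j) (w i) → D (w i) (w j)) :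
    ∃ w', EqvGen (AdjacentSwap D) w w' ∧ HasNoDescent r w' := by
  let _ : PartialOrder α := partialOrderOfSO r
  obtain ⟨ρ, hρ, hmin⟩ := Set.Finite.exists_minimalFor (fun ρ : Equiv.Perm ι => toLex (w ∘ ρ))
    {ρ | EqvGen (AdjacentSwap D) w (w ∘ ρ)} (Set.toFinite _) ⟨1, .refl w⟩
  refine ⟨w ∘ ρ, hρ, fun i j hij hji => ?_⟩
  have hswap : AdjacentSwap D (w ∘ ρ) (w ∘ ⇑(ρ * Equiv.swap i j)) :=
    ⟨i, j, hij, h _ _ hji, rfl⟩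
  have hlt : toLex (w ∘ ⇑(ρ * Equiv.swap i j)) < toLex (w ∘ ρ) :=
    Pi.lex_desc (f := w ∘ ρ) hij.le hji
  exact hlt.not_ge (hmin (hρ.trans _ _ _ (.rel _ _ hswap)) hlt.le)

theorem existsUnique_eqvGen_adjacentSwap_hasNoDescent [Std.Symm D] [IsStrictOrder α r] (w : ι → α)
    (h : ∀ i j, D (w i) (w j) ↔ SymmGen r (w i) (w j)) :
    ∃! w', EqvGen (AdjacentSwap D) w w' ∧ HasNoDescent r w' := by
  obtain ⟨u, hwu, hu⟩ :=
    exists_eqvGen_adjacentSwap_hasNoDescent w fun i j hji => (h i j).2 (.inr hji)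
  refine ⟨u, ⟨hwu, hu⟩, fun v ⟨hwv, hv⟩ => ?_⟩
  obtain ⟨ρ, rfl, -⟩ := exists_inversionsIn_of_eqvGen_adjacentSwap hwu
  obtain ⟨τ, rfl, hτ⟩ :=
    exists_inversionsIn_of_eqvGen_adjacentSwap ((hwu.symm _ _).trans _ _ _ hwv)
  rw [hu.perm_eq_one hv (hτ.mono fun i j => (h (ρ i) (ρ j)).1), Equiv.Perm.coe_one,
    Function.comp_id]

end Words

section IntervalOrder

variable {X Y : Type*} [PartialOrder Y] [BoundedOrder Y] {f g : X → Y}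

/-- The supports of `f` and `g`, where they take neither of the extreme values `⊥` and `⊤`, are
disjoint. -/
def DisjointSupports (f g : X → Y) : Prop :=
  Disjoint (f ⁻¹' Set.Ioo ⊥ ⊤) (g ⁻¹' Set.Ioo ⊥ ⊤)

instance : Std.Symm (DisjointSupports (X := X) (Y := Y)) where
  symm _ _ h := Disjoint.symm h

theorem DisjointSupports.exists_top_bot [TopologicalSpace X] [PreconnectedSpace X]
    [TopologicalSpace Y] [T1Space Y] [Nontrivial Y] (h : DisjointSupports f g)
    (hf : Continuous f) (hg : Continuous g) (hbot : ∃ s, f s = ⊥) (htop : ∃ t, f t = ⊤) :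
    (∃ t, f t = ⊤ ∧ g t = ⊥) ∨ ∃ t, g t = ⊤ ∧ f t = ⊥ := by
  have isClosed_level (c : Y) : IsClosed {t | f t = c ∨ g t = c} :=
    (isClosed_singleton.preimage hf).union (isClosed_singleton.preimage hg)
  have hcover : Set.univ ⊆ {t | f t = ⊥ ∨ g t = ⊥} ∪ {t | f t = ⊤ ∨ g t = ⊤} := by
    intro t _
    by_contra hmem
    simp only [Set.mem_union, Set.mem_ofPred_eq, not_or] at hmem
    obtain ⟨⟨hf₀, hg₀⟩, hf₁, hg₁⟩ := hmem
    exact Set.disjoint_left.1 h ⟨bot_lt_iff_ne_bot.2 hf₀, lt_top_iff_ne_top.2 hf₁⟩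
      ⟨bot_lt_iff_ne_bot.2 hg₀, lt_top_iff_ne_top.2 hg₁⟩
  obtain ⟨t, -, hf₀ | hg₀, hf₁ | hg₁⟩ := isPreconnected_closed_iff.1 isPreconnected_univ _ _
    (isClosed_level ⊥) (isClosed_level ⊤) hcover
    (hbot.imp fun _ hs => ⟨trivial, .inl hs⟩) (htop.imp fun _ ht => ⟨trivial, .inl ht⟩)
  · exact (bot_ne_top (hf₀.symm.trans hf₁)).elim
  · exact .inr ⟨t, hg₁, hf₀⟩
  · exact .inl ⟨t, hf₁, hg₀⟩
  · exact (bot_ne_top (hg₀.symm.trans hg₁)).elim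

variable [LinearOrder X]

/-- The interval order on functions: `f` and `g` are monotone and `f` reaches `⊤` before `g` leaves
`⊥`. Monotonicity is part of the relation so that it is transitive on all functions. -/
structure Precedes (f g : X → Y) : Prop where
  monotone_left : Monotone f
  monotone_right : Monotone g
  exists_top_bot : ∃ t, f t = ⊤ ∧ g t = ⊥

instance [Nontrivial Y] : IsStrictOrder (X → Y) Precedes where
  irrefl := fun f ⟨_, _, t, htop, hbot⟩ => bot_ne_top (hbot.symm.trans htop)
  trans := by
    rintro f g h ⟨hf, hg, s, hfs, hgs⟩ ⟨-, hh, t, hgt, hht⟩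
    have hst : s ≤ t := by
      by_contra! hts
      exact bot_ne_top (top_le_iff.1 (hgt.ge.trans ((hg hts.le).trans_eq hgs)))
    exact ⟨hf, hh, t, top_le_iff.1 (hfs.ge.trans (hf hst)), hht⟩

theorem Precedes.disjointSupports (h : Precedes f g) : DisjointSupports f g := by
  obtain ⟨hf, hg, t, hft, hgt⟩ := h
  refine Set.disjoint_left.2 fun s hfs hgs => ?_
  rcases le_total s t with hst | hts
  · exact hgs.1.ne' (le_bot_iff.1 ((hg hst).trans_eq hgt))
  · exact hfs.2.ne (top_le_iff.1 (hft.ge.trans (hf hts)))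

end IntervalOrder

section IsDiPath

open Relation

variable {n : ℕ} {β : Fin n → I → I}

theorem swapStep_eq_adjacentSwap :
    SwapStep (n := n) = AdjacentSwap DisjointSupports := by
  ext β β'
  constructor
  · rintro ⟨i, hi, hd, rfl⟩
    exact ⟨_, _, by simp, Set.disjoint_iff_inter_eq_empty.2 hd, rfl⟩
  · rintro ⟨⟨i, _⟩, ⟨j, hj⟩, hij, hd, rfl⟩
    obtain rfl : i + 1 = j := by simpa using hij
    exact ⟨i, hj, Set.disjoint_iff_inter_eq_empty.1 hd, rfl⟩

theorem IsDiPath.comp_perm (hβ : IsDiPath β) (ρ : Equiv.Perm (Fin n)) : IsDiPath (β ∘ ρ) :=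
  ⟨fun _ => hβ.1 _, fun _ => hβ.2.1 _, fun _ => hβ.2.2.1 _, fun _ => hβ.2.2.2 _⟩

theorem IsDiPath.of_eqvGen_adjacentSwap {γ : Fin n → I → I} (hβ : IsDiPath β)
    (h : EqvGen (AdjacentSwap DisjointSupports) β γ) : IsDiPath γ := by
  obtain ⟨ρ, rfl, -⟩ := exists_inversionsIn_of_eqvGen_adjacentSwap h
  exact hβ.comp_perm ρ

theorem IsDiPath.disjointSupports_iff (hβ : IsDiPath β) (i j : Fin n) :
    DisjointSupports (β i) (β j) ↔ SymmGen Precedes (β i) (β j) := by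
  obtain ⟨hcont, hmono, hzero, hone⟩ := hβ
  refine ⟨fun h => ?_, fun h => h.elim (·.disjointSupports) (symm ·.disjointSupports)⟩
  exact (h.exists_top_bot (hcont i) (hcont j) ⟨0, hzero i⟩ ⟨1, hone i⟩).imp
    (⟨hmono i, hmono j, ·⟩) (⟨hmono j, hmono i, ·⟩)

theorem IsDiPath.isSorted_iff (hβ : IsDiPath β) : IsSorted β ↔ HasNoDescent Precedes β := by
  constructor
  · rintro hs ⟨i, _⟩ ⟨j, hj⟩ hij hji
    obtain rfl : i + 1 = j := by simpa using hij
    obtain ⟨t, -, -, htop, hbot⟩ :=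
      hs i hj (Set.disjoint_iff_inter_eq_empty.1 (symm hji.disjointSupports))
    exact asymm hji ⟨hβ.2.1 _, hβ.2.1 _, t, htop, hbot⟩
  · intro hs i hi hd
    have hcomp := (hβ.disjointSupports_iff _ _).1 (Set.disjoint_iff_inter_eq_empty.2 hd)
    obtain ⟨t, htop, hbot⟩ := (hcomp.resolve_right (hs _ _ (by simp))).exists_top_bot
    have ht₀ : t ≠ 0 := by
      rintro rfl
      exact zero_ne_one ((hβ.2.2.1 _).symm.trans htop)
    have ht₁ : t ≠ 1 := by
      rintro rfl
      exact zero_ne_one (hbot.symm.trans (hβ.2.2.2 _))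
    exact ⟨t, unitInterval.pos_iff_ne_zero.2 ht₀, unitInterval.lt_one_iff_ne_one.2 ht₁, htop, hbot⟩

end IsDiPath

/-- For every `n ≥ 1` and every monotone path `β` in the `n`-cube
from `0` to `1`, there is exactly one sorted path `β'` with `β ∼ β'`, where `∼` is
the equivalence relation generated by swapping adjacent coordinates with disjoint
supports. -/
theorem stmt19 (n : ℕ) (hn : 1 ≤ n) (β : Fin n → I → I) (hβ : IsDiPath β) :
    ∃! β' : Fin n → I → I,
      IsDiPath β' ∧ IsSorted β' ∧ Relation.EqvGen SwapStep β β' := by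
  rw [swapStep_eq_adjacentSwap]
  obtain ⟨γ, ⟨hβγ, hγ⟩, huniq⟩ :=
    existsUnique_eqvGen_adjacentSwap_hasNoDescent β hβ.disjointSupports_iff
  have hγ' := hβ.of_eqvGen_adjacentSwap hβγ
  exact ⟨γ, ⟨hγ', hγ'.isSorted_iff.2 hγ, hβγ⟩,
    fun δ ⟨hδ, hsorted, hβδ⟩ => huniq δ ⟨hβδ, hδ.isSorted_iff.1 hsorted⟩⟩
end
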